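/- Let μ be an invariant, continuous and simple valuation on C^N. Then there exists a continuous function φ : [0,∞) → ℝ with φ(0) = 0 such that μ(t·1_K) = φ(t) · vol_N(K) for every t ≥ 0 and every convex body K ⊆ ℝ^N, where 1_K is the characteristic function of K and vol_N is the N-dimensional Lebesgue measure. -/

import Mathlib

open Filter Topology MeasureTheory

noncomputable section

/-- A function `f : ℝ^N → ℝ` is quasi-concave if it is nonnegative and all its
superlevel sets `{x | t ≤ f x}` for `t > 0` are empty or compact and convex. -/
def QuasiConcave {N : ℕ} (f : EuclideanSpace ℝ (Fin N) → ℝ) : Prop :=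
  (∀ x, 0 ≤ f x) ∧
  ∀ t : ℝ, 0 < t →
    {x | t ≤ f x} = ∅ ∨ (IsCompact {x | t ≤ f x} ∧ Convex ℝ {x | t ≤ f x})

/-- `μ` is a valuation on `C^N`: it vanishes on the zero function and satisfies
the inclusion-exclusion property with respect to pointwise max and min. -/
def IsValuation {N : ℕ} (μ : (EuclideanSpace ℝ (Fin N) → ℝ) → ℝ) : Prop :=
  μ (fun _ => 0) = 0 ∧
  ∀ f g : EuclideanSpace ℝ (Fin N) → ℝ,
    QuasiConcave f → QuasiConcave g →
    QuasiConcave (fun x => max (f x) (g x)) →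
    μ (fun x => max (f x) (g x)) + μ (fun x => min (f x) (g x)) = μ f + μ g

/-- `μ` is invariant under rigid motions (isometries) of `ℝ^N`. -/
def IsInvariantVal {N : ℕ} (μ : (EuclideanSpace ℝ (Fin N) → ℝ) → ℝ) : Prop :=
  ∀ (T : EuclideanSpace ℝ (Fin N) ≃ᵢ EuclideanSpace ℝ (Fin N))
    (f : EuclideanSpace ℝ (Fin N) → ℝ), QuasiConcave f →
    μ (fun x => f (T x)) = μ f

/-- `μ` is continuous: it preserves limits of monotone pointwise convergent
sequences of quasi-concave functions. -/
def IsContinuousVal {N : ℕ} (μ : (EuclideanSpace ℝ (Fin N) → ℝ) → ℝ) : Prop :=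
  ∀ (fi : ℕ → EuclideanSpace ℝ (Fin N) → ℝ) (f : EuclideanSpace ℝ (Fin N) → ℝ),
    (∀ i, QuasiConcave (fi i)) → QuasiConcave f →
    (Monotone fi ∨ Antitone fi) →
    (∀ x, Tendsto (fun i => fi i x) atTop (𝓝 (f x))) →
    Tendsto (fun i => μ (fi i)) atTop (𝓝 (μ f))

/-- `μ` is simple: it vanishes on quasi-concave functions which are zero a.e. -/
def IsSimpleVal {N : ℕ} (μ : (EuclideanSpace ℝ (Fin N) → ℝ) → ℝ) : Prop :=
  ∀ f : EuclideanSpace ℝ (Fin N) → ℝ, QuasiConcave f →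
    (∀ᵐ x : EuclideanSpace ℝ (Fin N), f x = 0) → μ f = 0

/-- `μ` is monotone increasing: `f ≤ g` pointwise implies `μ f ≤ μ g`. -/
def IsMonotoneVal {N : ℕ} (μ : (EuclideanSpace ℝ (Fin N) → ℝ) → ℝ) : Prop :=
  ∀ f g : EuclideanSpace ℝ (Fin N) → ℝ, QuasiConcave f → QuasiConcave g →
    (∀ x, f x ≤ g x) → μ f ≤ μ g

/-- A convex body in `ℝ^N` is a nonempty compact convex subset. -/
def IsConvexBody {N : ℕ} (K : Set (EuclideanSpace ℝ (Fin N))) : Prop :=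
  K.Nonempty ∧ IsCompact K ∧ Convex ℝ K

/-!
For fixed `t`, the map `K ↦ μ (t · 1_K)` is a simple valuation on compact convex sets that is
invariant under rigid motions. Subtracting the right multiple of the volume makes it vanish on unit
cubes, so everything rests on Hadwiger's theorem that a simple valuation `f` which is invariant
under translations and reflections and vanishes on unit cubes is zero.

This goes by induction on the dimension. Applied to `L ↦ f (L + M)`, the induction hypothesis shows
that `f` vanishes on sums of sets lying in complementary orthogonal subspaces. Cutting a doubled
orthoscheme into two copies of itself and such sums gives `f (2 • K) = 2 * f K` for orthoschemes,
hence for all `K`, by dissecting polytopes into orthoschemes and approximating `K` by polytopes from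
outside. It follows that the Minkowski defect `f (K + L) - f K - f L` is invariant under
`K ↦ 2⁻¹ • K`, and continuity along the shrinking dilates `2⁻ⁿ • K` makes it zero. As `f` is now
Minkowski additive and reflection invariant, it does not change when `K` is replaced by a Minkowski
average of reflections of `K`. Such averages approximate a ball, so `f K` is a multiple of the value
of `f` on the unit ball, and comparison with the unit cube shows that this value is `0`.
-/

section

open scoped Pointwise InnerProductSpace

section TopologicalVectorSpace

variable {E : Type*} [AddCommGroup E] [Module ℝ E] [TopologicalSpace E] [IsTopologicalAddGroup E]
  [ContinuousSMul ℝ E]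

lemma exists_mem_segment_inter {K L : Set E} (hK : IsClosed K) (hL : IsClosed L)
    (h : Convex ℝ (K ∪ L)) {k l : E} (hk : k ∈ K) (hl : l ∈ L) :
    ∃ z ∈ segment ℝ k l, z ∈ K ∩ L :=
  isPreconnected_closed_iff.1 (convex_segment k l).isPreconnected K L hK hL
    (h.segment_subset (.inl hk) (.inr hl))
    ⟨k, left_mem_segment ℝ k l, hk⟩ ⟨l, right_mem_segment ℝ k l, hl⟩

lemma inter_add_of_convex_union {K L M : Set E} (hK : IsClosed K) (hL : IsClosed L)
    (hM : Convex ℝ M) (h : Convex ℝ (K ∪ L)) : (K ∩ L) + M = (K + M) ∩ (L + M) := by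
  refine Set.Subset.antisymm Set.inter_add_subset ?_
  rintro x ⟨⟨k, hk, m, hm, rfl⟩, ⟨l, hl, m', hm', hx : l + m' = k + m⟩⟩
  obtain ⟨z, ⟨a, b, ha, hb, hab, rfl⟩, hz⟩ := exists_mem_segment_inter hK hL h hk hl
  refine ⟨_, hz, a • m + b • m', hM hm hm' ha hb hab, ?_⟩
  calc a • k + b • l + (a • m + b • m') = a • (k + m) + b • (l + m') := by module
    _ = k + m := by rw [hx, ← add_smul, hab, one_smul]

end TopologicalVectorSpace

lemma iInter_add_of_antitone {G : Type*} [AddCommGroup G] [TopologicalSpace G]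
    [IsTopologicalAddGroup G] [T2Space G] {K : ℕ → Set G} {M : Set G} (hK : ∀ i, IsCompact (K i))
    (hanti : Antitone K) (hM : IsClosed M) : (⋂ i, K i) + M = ⋂ i, (K i + M) := by
  refine Set.Subset.antisymm ?_ fun x hx => ?_
  · rintro x ⟨k, hk, m, hm, rfl⟩
    exact Set.mem_iInter.2 fun i => ⟨k, Set.mem_iInter.1 hk i, m, hm, rfl⟩
  · have hM' : IsClosed ((fun l => x - l) ⁻¹' M) := hM.preimage (by fun_prop)
    have hne : ∀ i, (K i ∩ ((fun l => x - l) ⁻¹' M)).Nonempty := fun i => by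
      obtain ⟨k, hk, m, hm, rfl⟩ := Set.mem_iInter.1 hx i
      exact ⟨k, hk, by simpa using hm⟩
    obtain ⟨z, hz⟩ := IsCompact.nonempty_iInter_of_sequence_nonempty_isCompact_isClosed _
      (fun i => Set.inter_subset_inter_left _ (hanti i.le_succ)) hne
      ((hK 0).inter_right hM') fun i => (hK i).isClosed.inter hM'
    rw [Set.mem_iInter] at hz
    exact ⟨z, Set.mem_iInter.2 fun i => (hz i).1, x - z, (hz 0).2, add_sub_cancel z x⟩

/-- The Euler characteristic of a convex set. -/
def eulerChar {X : Type*} (K : Set X) : ℝ :=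
  open Classical in if K.Nonempty then 1 else 0

lemma eulerChar_of_nonempty {X : Type*} {K : Set X} (h : K.Nonempty) : eulerChar K = 1 := if_pos h

lemma eulerChar_empty {X : Type*} : eulerChar (∅ : Set X) = 0 := if_neg Set.not_nonempty_empty

section ConvexValuations

variable {V W : Type*} [NormedAddCommGroup V] [NormedSpace ℝ V]
  [NormedAddCommGroup W] [NormedSpace ℝ W]

/-- Compact convex sets, the empty set included: the domain of the set valuations below. -/
structure IsCompactConvex (K : Set V) : Prop where
  isCompact : IsCompact K
  convex : Convex ℝ K

/-- A valuation on compact convex sets that is continuous along decreasing sequences. Its values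
on other sets are irrelevant. -/
structure IsConvexValuation (f : Set V → ℝ) : Prop where
  empty : f ∅ = 0
  union_add_inter : ∀ ⦃K L : Set V⦄, IsCompactConvex K → IsCompactConvex L →
    Convex ℝ (K ∪ L) → f (K ∪ L) + f (K ∩ L) = f K + f L
  tendsto_iInter : ∀ ⦃K : ℕ → Set V⦄, (∀ i, IsCompactConvex (K i)) → Antitone K →
    Tendsto (fun i => f (K i)) atTop (𝓝 (f (⋂ i, K i)))

/-- Invariance under translations, on compact convex sets. -/
def IsTranslationInvariant (f : Set V → ℝ) : Prop :=
  ∀ ⦃K : Set V⦄, IsCompactConvex K → ∀ v : V, f (v +ᵥ K) = f K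

namespace IsCompactConvex

variable {K L : Set V}

lemma empty : IsCompactConvex (∅ : Set V) := ⟨isCompact_empty, convex_empty⟩

lemma singleton (v : V) : IsCompactConvex ({v} : Set V) :=
  ⟨isCompact_singleton, convex_singleton v⟩

lemma isClosed (hK : IsCompactConvex K) : IsClosed K := hK.isCompact.isClosed

lemma add (hK : IsCompactConvex K) (hL : IsCompactConvex L) : IsCompactConvex (K + L) :=
  ⟨hK.isCompact.add hL.isCompact, hK.convex.add hL.convex⟩

lemma vadd (hK : IsCompactConvex K) (v : V) : IsCompactConvex (v +ᵥ K) :=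
  ⟨hK.isCompact.vadd v, hK.convex.vadd v⟩

lemma smul (hK : IsCompactConvex K) (c : ℝ) : IsCompactConvex (c • K) :=
  ⟨hK.isCompact.smul c, hK.convex.smul c⟩

lemma inter_closed (hK : IsCompactConvex K) (hLc : IsClosed L) (hL : Convex ℝ L) :
    IsCompactConvex (K ∩ L) :=
  ⟨hK.isCompact.inter_right hLc, hK.convex.inter hL⟩

lemma inter (hK : IsCompactConvex K) (hL : IsCompactConvex L) : IsCompactConvex (K ∩ L) :=
  hK.inter_closed hL.isClosed hL.convex

lemma image (hK : IsCompactConvex K) (A : V →L[ℝ] W) : IsCompactConvex (A '' K) :=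
  ⟨hK.isCompact.image A.continuous, hK.convex.linear_image A.toLinearMap⟩

end IsCompactConvex

namespace IsConvexValuation

variable {f g : Set V → ℝ}

lemma add (hf : IsConvexValuation f) (hg : IsConvexValuation g) :
    IsConvexValuation (fun K => f K + g K) where
  empty := by rw [hf.empty, hg.empty, add_zero]
  union_add_inter K L hK hL h := by
    linarith [hf.union_add_inter hK hL h, hg.union_add_inter hK hL h]
  tendsto_iInter K hK h := (hf.tendsto_iInter hK h).add (hg.tendsto_iInter hK h)

lemma const_mul (hf : IsConvexValuation f) (c : ℝ) : IsConvexValuation (fun K => c * f K) where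
  empty := by rw [hf.empty, mul_zero]
  union_add_inter K L hK hL h := by rw [← mul_add, ← mul_add, hf.union_add_inter hK hL h]
  tendsto_iInter K hK h := (hf.tendsto_iInter hK h).const_mul c

protected lemma eulerChar : IsConvexValuation (eulerChar : Set V → ℝ) where
  empty := eulerChar_empty
  union_add_inter K L hK hL h := by
    rcases K.eq_empty_or_nonempty with rfl | hKn
    · rw [Set.empty_union, Set.empty_inter, add_comm]
    rcases L.eq_empty_or_nonempty with rfl | hLn
    · rw [Set.union_empty, Set.inter_empty]
    obtain ⟨z, _, hz⟩ :=
      exists_mem_segment_inter hK.isClosed hL.isClosed h hKn.some_mem hLn.some_mem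
    rw [eulerChar_of_nonempty ⟨z, hz⟩, eulerChar_of_nonempty hKn, eulerChar_of_nonempty hLn,
      eulerChar_of_nonempty (hKn.mono Set.subset_union_left)]
  tendsto_iInter K hK h := by
    by_cases hne : ∀ i, (K i).Nonempty
    · have := IsCompact.nonempty_iInter_of_sequence_nonempty_isCompact_isClosed K
        (fun i => h i.le_succ) hne (hK 0).isCompact fun i => (hK i).isClosed
      simp only [eulerChar_of_nonempty this, eulerChar_of_nonempty (hne _), tendsto_const_nhds]
    · simp only [not_forall, Set.not_nonempty_iff_eq_empty] at hne
      obtain ⟨i, hi⟩ := hne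
      have hev : (fun j => eulerChar (K j)) =ᶠ[atTop] fun _ => eulerChar (⋂ i, K i) := by
        filter_upwards [eventually_ge_atTop i] with j hj
        rw [Set.subset_eq_empty (h hj) hi, Set.subset_eq_empty (Set.iInter_subset K i) hi]
      exact tendsto_const_nhds.congr' hev.symm

lemma comp_image_add (hf : IsConvexValuation f) {A : W →L[ℝ] V} (hA : Function.Injective A)
    {M : Set V} (hM : IsCompactConvex M) : IsConvexValuation (fun L => f (A '' L + M)) where
  empty := by rw [Set.image_empty, Set.empty_add, hf.empty]
  union_add_inter K L hK hL h := by
    have hunion : Convex ℝ (A '' K ∪ A '' L) := by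
      rw [← Set.image_union]
      exact h.linear_image A.toLinearMap
    rw [Set.image_union, Set.image_inter hA, inter_add_of_convex_union (hK.image A).isClosed
      (hL.image A).isClosed hM.convex hunion, Set.union_add]
    refine hf.union_add_inter ((hK.image A).add hM) ((hL.image A).add hM) ?_
    rw [← Set.union_add]
    exact hunion.add hM.convex
  tendsto_iInter K hK h := by
    have hanti : Antitone (fun i => A '' K i) := fun i j hij => Set.image_mono (h hij)
    rw [hA.injOn.image_iInter_eq, iInter_add_of_antitone (fun i => ((hK i).image A).isCompact)
      hanti hM.isClosed]
    exact hf.tendsto_iInter (fun i => ((hK i).image A).add hM)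
      fun i j hij => Set.add_subset_add_right (hanti hij)

lemma comp_image (hf : IsConvexValuation f) {A : W →L[ℝ] V} (hA : Function.Injective A) :
    IsConvexValuation (fun L => f (A '' L)) := by
  simpa only [Set.add_singleton, add_zero, Set.image_id'] using
    hf.comp_image_add hA (IsCompactConvex.singleton 0)

lemma comp_smul (hf : IsConvexValuation f) {c : ℝ} (hc : c ≠ 0) :
    IsConvexValuation (fun L => f (c • L)) :=
  hf.comp_image (A := c • ContinuousLinearMap.id ℝ V) (smul_right_injective V hc)

end IsConvexValuation

end ConvexValuations

section HalfSpaces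

variable {V : Type*} [NormedAddCommGroup V] [InnerProductSpace ℝ V]

/-- A function of compact convex sets that vanishes on subsets of hyperplanes and is additive when
a set is cut by a hyperplane: all that is needed to compute with dissections of polytopes. -/
structure IsDissectionAdditive (f : Set V → ℝ) : Prop where
  empty : f ∅ = 0
  eq_zero_of_subset_hyperplane : ∀ ⦃K : Set V⦄, IsCompactConvex K → ∀ ⦃u : V⦄, u ≠ 0 → ∀ ⦃c : ℝ⦄,
    K ⊆ {x | ⟪u, x⟫_ℝ = c} → f K = 0
  cut : ∀ ⦃K : Set V⦄, IsCompactConvex K → ∀ ⦃u : V⦄, u ≠ 0 → ∀ c : ℝ,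
    f K = f (K ∩ {x | ⟪u, x⟫_ℝ ≤ c}) + f (K ∩ {x | c ≤ ⟪u, x⟫_ℝ})

/-- A continuous valuation on compact convex sets that vanishes on subsets of hyperplanes. -/
structure IsSimpleValuation (f : Set V → ℝ) : Prop extends IsConvexValuation f where
  eq_zero_of_subset_hyperplane : ∀ ⦃K : Set V⦄, IsCompactConvex K → ∀ ⦃u : V⦄, u ≠ 0 → ∀ ⦃c : ℝ⦄,
    K ⊆ {x | ⟪u, x⟫_ℝ = c} → f K = 0

lemma isClosed_halfSpace_le (u : V) (c : ℝ) : IsClosed {x : V | ⟪u, x⟫_ℝ ≤ c} :=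
  isClosed_le (by fun_prop) continuous_const

lemma convex_halfSpace_inner_le (u : V) (c : ℝ) : Convex ℝ {x : V | ⟪u, x⟫_ℝ ≤ c} :=
  convex_halfSpace_le (innerₗ V u).isLinear c

lemma isClosed_halfSpace_ge (u : V) (c : ℝ) : IsClosed {x : V | c ≤ ⟪u, x⟫_ℝ} :=
  isClosed_le continuous_const (by fun_prop)

lemma convex_halfSpace_inner_ge (u : V) (c : ℝ) : Convex ℝ {x : V | c ≤ ⟪u, x⟫_ℝ} :=
  convex_halfSpace_ge (innerₗ V u).isLinear c

lemma IsCompactConvex.inter_halfSpace_le {K : Set V} (hK : IsCompactConvex K) (u : V) (c : ℝ) :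
    IsCompactConvex (K ∩ {x | ⟪u, x⟫_ℝ ≤ c}) :=
  hK.inter_closed (isClosed_halfSpace_le u c) (convex_halfSpace_inner_le u c)

lemma IsCompactConvex.inter_halfSpace_ge {K : Set V} (hK : IsCompactConvex K) (u : V) (c : ℝ) :
    IsCompactConvex (K ∩ {x | c ≤ ⟪u, x⟫_ℝ}) :=
  hK.inter_closed (isClosed_halfSpace_ge u c) (convex_halfSpace_inner_ge u c)

lemma IsSimpleValuation.isDissectionAdditive {f : Set V → ℝ} (hf : IsSimpleValuation f) :
    IsDissectionAdditive f where
  empty := hf.empty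
  eq_zero_of_subset_hyperplane := hf.eq_zero_of_subset_hyperplane
  cut K hK u hu c := by
    have hle := hK.inter_halfSpace_le u c
    have hge := hK.inter_halfSpace_ge u c
    have hunion : (K ∩ {x | ⟪u, x⟫_ℝ ≤ c}) ∪ (K ∩ {x | c ≤ ⟪u, x⟫_ℝ}) = K := by
      rw [← Set.inter_union_distrib_left]
      exact Set.inter_eq_left.2 fun x _ => le_total ⟪u, x⟫_ℝ c
    have hinter : f ((K ∩ {x | ⟪u, x⟫_ℝ ≤ c}) ∩ (K ∩ {x | c ≤ ⟪u, x⟫_ℝ})) = 0 :=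
      hf.eq_zero_of_subset_hyperplane (hle.inter hge) hu fun x hx => le_antisymm hx.1.2 hx.2.2
    have hval := hf.union_add_inter hle hge (hunion.symm ▸ hK.convex)
    rwa [hunion, hinter, add_zero] at hval

end HalfSpaces

section Polyhedra

variable {V : Type*} [NormedAddCommGroup V] [InnerProductSpace ℝ V]

/-- The intersection of the half-spaces `⟪p.1, x⟫ ≤ p.2` with `p ∈ s`. -/
def polyhedron (s : Set (V × ℝ)) : Set V :=
  {x | ∀ p ∈ s, ⟪p.1, x⟫_ℝ ≤ p.2}

/-- The cone on which `⟪u, x⟫` is maximal among the functionals `⟪v, x⟫`, `v ∈ s`. -/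
def dominanceCell (s : Finset V) (u : V) : Set V :=
  {x | ∀ v ∈ s, ⟪v, x⟫_ℝ ≤ ⟪u, x⟫_ℝ}

lemma polyhedron_eq_biInter (s : Set (V × ℝ)) :
    polyhedron s = ⋂ p ∈ s, {x | ⟪p.1, x⟫_ℝ ≤ p.2} := by
  ext x
  simp only [polyhedron, Set.mem_ofPred_eq, Set.mem_iInter]

lemma isClosed_polyhedron (s : Set (V × ℝ)) : IsClosed (polyhedron s) :=
  polyhedron_eq_biInter s ▸ isClosed_biInter fun _ _ => isClosed_halfSpace_le _ _

lemma convex_polyhedron (s : Set (V × ℝ)) : Convex ℝ (polyhedron s) :=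
  polyhedron_eq_biInter s ▸ convex_iInter₂ fun _ _ => convex_halfSpace_inner_le _ _

lemma polyhedron_empty : polyhedron (∅ : Set (V × ℝ)) = Set.univ := by
  rw [polyhedron_eq_biInter, Set.biInter_empty]

lemma polyhedron_union (s t : Set (V × ℝ)) :
    polyhedron (s ∪ t) = polyhedron s ∩ polyhedron t := by
  simp only [polyhedron_eq_biInter, Set.biInter_union]

lemma polyhedron_insert (p : V × ℝ) (s : Set (V × ℝ)) :
    polyhedron (insert p s) = polyhedron s ∩ {x | ⟪p.1, x⟫_ℝ ≤ p.2} := by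
  simp only [polyhedron_eq_biInter, Set.biInter_insert, Set.inter_comm]

lemma dominanceCell_eq_polyhedron (s : Finset V) (u : V) :
    dominanceCell s u = polyhedron ((fun v => (v - u, 0)) '' s) := by
  ext x
  simp only [dominanceCell, polyhedron, Set.mem_ofPred_eq, Set.forall_mem_image, inner_sub_left,
    sub_nonpos, Finset.mem_coe]

lemma IsCompactConvex.inter_dominanceCell {K : Set V} (hK : IsCompactConvex K) (s : Finset V)
    (u : V) : IsCompactConvex (K ∩ dominanceCell s u) :=
  dominanceCell_eq_polyhedron s u ▸
    hK.inter_closed (isClosed_polyhedron _) (convex_polyhedron _)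

lemma IsDissectionAdditive.eq_sum_dominanceCell {f : Set V → ℝ} (hf : IsDissectionAdditive f)
    {s : Finset V} (hs : s.Nonempty) {K : Set V} (hK : IsCompactConvex K) :
    f K = ∑ u ∈ s, f (K ∩ dominanceCell s u) := by
  induction hs using Finset.Nonempty.cons_induction generalizing K with
  | singleton a => simp [dominanceCell]
  | cons m s hm _ ih =>
    rw [Finset.sum_cons, ih (hK.inter_dominanceCell _ _), ← Finset.sum_add_distrib, ih hK]
    refine Finset.sum_congr rfl fun u hu => ?_
    have hmu : m - u ≠ 0 := sub_ne_zero.2 fun h => hm (h ▸ hu)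
    rw [hf.cut (hK.inter_dominanceCell s u) hmu 0, add_comm]
    congr 2 <;> ext x <;>
      simp only [dominanceCell, Set.mem_inter_iff, Set.mem_ofPred_eq, Finset.mem_cons,
        forall_eq_or_imp, inner_sub_left, sub_nonneg, sub_nonpos, le_refl, true_and]
    · exact ⟨fun ⟨⟨hx, h⟩, hum⟩ => ⟨⟨hx, fun v hv => (h v hv).trans hum⟩, h⟩,
        fun ⟨⟨hx, h⟩, h'⟩ => ⟨⟨hx, h'⟩, h u hu⟩⟩
    · tauto

lemma exists_isCompact_polyhedron_superset [FiniteDimensional ℝ V] {B : Set V}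
    (hB : Bornology.IsBounded B) :
    ∃ s : Set (V × ℝ), s.Finite ∧ (∀ p ∈ s, 0 ≤ p.2) ∧ IsCompact (polyhedron s) ∧
      B ⊆ polyhedron s := by
  obtain ⟨R, hR, hBR⟩ := hB.subset_closedBall_lt 0 0
  let b := stdOrthonormalBasis ℝ V
  let s : Set (V × ℝ) := Set.range (fun i => (b i, R)) ∪ Set.range (fun i => (-b i, R))
  have hmem : ∀ x, x ∈ polyhedron s ↔ ∀ i, |⟪b i, x⟫_ℝ| ≤ R := fun x => by
    rw [polyhedron_union]
    simp only [polyhedron, Set.mem_inter_iff, Set.mem_ofPred_eq, Set.forall_mem_range,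
      inner_neg_left, abs_le', forall_and]
  have hbounded : polyhedron s ⊆ Metric.closedBall 0 (∑ _i, R) := fun x hx => by
    rw [mem_closedBall_zero_iff, ← b.sum_repr' x]
    refine (norm_sum_le _ _).trans (Finset.sum_le_sum fun i _ => ?_)
    rw [norm_smul, b.norm_eq_one, mul_one]
    exact (hmem x).1 hx i
  refine ⟨s, (Set.finite_range _).union (Set.finite_range _), ?_,
    (isCompact_closedBall _ _).of_isClosed_subset (isClosed_polyhedron s) hbounded, ?_⟩
  · rintro p (⟨i, rfl⟩ | ⟨i, rfl⟩) <;> exact hR.le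
  · refine fun x hx => (hmem x).2 fun i => (abs_real_inner_le_norm _ _).trans ?_
    rw [b.norm_eq_one, one_mul]
    exact mem_closedBall_zero_iff.1 (hBR hx)

lemma exists_antitone_polyhedron_iInter_eq [FiniteDimensional ℝ V] {K : Set V}
    (hK : IsCompactConvex K) :
    ∃ s : ℕ → Set (V × ℝ), (∀ n, (s n).Finite) ∧ (∀ n, IsCompact (polyhedron (s n))) ∧
      Antitone (fun n => polyhedron (s n)) ∧ ⋂ n, polyhedron (s n) = K := by
  obtain ⟨l, c, hlc⟩ := RCLike.iInter_countable_halfSpaces_eq (𝕜 := ℝ) hK.convex hK.isClosed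
  obtain ⟨s, hs, -, hcpt, hKs⟩ := exists_isCompact_polyhedron_superset hK.isCompact.isBounded
  let p (i : ℕ) : V × ℝ := ((InnerProductSpace.toDual ℝ V).symm (l i), c i)
  have hp : ⋂ i, {x | ⟪(p i).1, x⟫_ℝ ≤ (p i).2} = K := by
    simpa only [p, InnerProductSpace.toDual_symm_apply, RCLike.re_to_real] using hlc
  have hmem : ∀ n x, x ∈ polyhedron (s ∪ p '' Set.Iio n) ↔
      x ∈ polyhedron s ∧ ∀ i < n, ⟪(p i).1, x⟫_ℝ ≤ (p i).2 := fun n x => by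
    rw [polyhedron_union, Set.mem_inter_iff]
    exact and_congr_right fun _ => Set.forall_mem_image
  refine ⟨fun n => s ∪ p '' Set.Iio n, fun n => hs.union ((Set.finite_Iio n).image p),
    fun n => hcpt.of_isClosed_subset (isClosed_polyhedron _) fun x hx => ((hmem n x).1 hx).1,
    fun m n hmn x hx => ?_,
    Set.Subset.antisymm (fun x hx => ?_) (Set.subset_iInter fun n x hx => ?_)⟩
  · exact (hmem m x).2 ⟨((hmem n x).1 hx).1, fun i hi => ((hmem n x).1 hx).2 i (hi.trans_le hmn)⟩
  · exact hp ▸ Set.mem_iInter.2 fun i =>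
      ((hmem (i + 1) x).1 (Set.mem_iInter.1 hx (i + 1))).2 i i.lt_succ_self
  · exact (hmem n x).2 ⟨hKs hx, fun i _ => Set.mem_iInter.1 (hp ▸ hx) i⟩

end Polyhedra

section Pyramids

variable {V : Type*} [NormedAddCommGroup V] [InnerProductSpace ℝ V]

/-- The projection of `x` from the origin to the hyperplane `⟪w, x⟫ = 1`, where the foot
`‖w‖⁻² • w` of the perpendicular is taken as the origin of this hyperplane. -/
def centralProjection (w x : V) : (ℝ ∙ w)ᗮ :=
  (⟪w, x⟫_ℝ)⁻¹ • (ℝ ∙ w)ᗮ.orthogonalProjectionOnto x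

/-- The pyramid with apex `0` whose base is the copy of `G` in the hyperplane `⟪w, x⟫ = 1`. The apex
is included even when `G` is empty. -/
def pyramid (w : V) (G : Set (ℝ ∙ w)ᗮ) : Set V :=
  {x | x = 0 ∨ ⟪w, x⟫_ℝ ∈ Set.Ioc 0 1 ∧ centralProjection w x ∈ G}

lemma inner_coe_orthogonal_span_singleton (w : V) (g : (ℝ ∙ w)ᗮ) : ⟪w, (g : V)⟫_ℝ = 0 :=
  Submodule.mem_orthogonal_singleton_iff_inner_right.1 g.2

lemma inner_eq_inner_mul_inner_centralProjection {w x : V} (hx : ⟪w, x⟫_ℝ ≠ 0) (u : (ℝ ∙ w)ᗮ) :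
    ⟪(u : V), x⟫_ℝ = ⟪w, x⟫_ℝ * ⟪u, centralProjection w x⟫_ℝ := by
  rw [centralProjection, real_inner_smul_right, mul_inv_cancel_left₀ hx,
    Submodule.inner_orthogonalProjectionOnto_eq_of_mem_left]

lemma inner_sub_smul_eq_inner_mul {w x : V} (hx : ⟪w, x⟫_ℝ ≠ 0) (u : (ℝ ∙ w)ᗮ) (c : ℝ) :
    ⟪(u : V) - c • w, x⟫_ℝ = ⟪w, x⟫_ℝ * (⟪u, centralProjection w x⟫_ℝ - c) := by
  rw [inner_sub_left, real_inner_smul_left, inner_eq_inner_mul_inner_centralProjection hx,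
    mul_sub, mul_comm c]

lemma coe_sub_smul_ne_zero {w : V} {u : (ℝ ∙ w)ᗮ} (hu : u ≠ 0) (c : ℝ) : (u : V) - c • w ≠ 0 := by
  intro h
  have : ⟪(u : V) - c • w, (u : V)⟫_ℝ = 0 := by rw [h, inner_zero_left]
  rw [inner_sub_left, real_inner_smul_left, inner_coe_orthogonal_span_singleton, mul_zero,
    sub_zero, inner_self_eq_zero] at this
  exact hu (Subtype.ext this)

lemma inv_smul_eq_add_centralProjection {w x : V} (hx : ⟪w, x⟫_ℝ ≠ 0) :
    (⟪w, x⟫_ℝ)⁻¹ • x = (‖w‖ ^ 2)⁻¹ • w + (centralProjection w x : V) := by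
  have hsplit := (ℝ ∙ w).starProjection_add_starProjection_orthogonal x
  rw [Submodule.starProjection_singleton, RCLike.ofReal_real_eq_id, id, div_eq_mul_inv, mul_smul,
    Submodule.starProjection_apply] at hsplit
  rw [inv_smul_eq_iff₀ hx, smul_add, centralProjection, Submodule.coe_smul, smul_inv_smul₀ hx,
    hsplit]

lemma inner_smul_add_coe {w : V} (hw : w ≠ 0) (t : ℝ) (g : (ℝ ∙ w)ᗮ) :
    ⟪w, t • ((‖w‖ ^ 2)⁻¹ • w + (g : V))⟫_ℝ = t := by
  rw [real_inner_smul_right, inner_add_right, real_inner_smul_right, real_inner_self_eq_norm_sq,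
    inv_mul_cancel₀ (pow_ne_zero 2 (norm_ne_zero_iff.2 hw)), inner_coe_orthogonal_span_singleton,
    add_zero, mul_one]

lemma centralProjection_smul_add {w : V} (hw : w ≠ 0) {t : ℝ} (ht : t ≠ 0) (g : (ℝ ∙ w)ᗮ) :
    centralProjection w (t • ((‖w‖ ^ 2)⁻¹ • w + (g : V))) = g := by
  have hinner := inner_smul_add_coe hw t g
  have h := inv_smul_eq_add_centralProjection (hinner.trans_ne ht)
  rw [hinner, inv_smul_smul₀ ht] at h
  exact Subtype.ext (add_left_cancel h).symm

lemma mem_pyramid_iff {w : V} (hw : w ≠ 0) {G : Set (ℝ ∙ w)ᗮ} {x : V} :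
    x ∈ pyramid w G ↔
      x = 0 ∨ ∃ t ∈ Set.Ioc (0 : ℝ) 1, ∃ g ∈ G, t • ((‖w‖ ^ 2)⁻¹ • w + (g : V)) = x := by
  refine or_congr_right ⟨fun ⟨ht, hG⟩ => ⟨_, ht, _, hG, ?_⟩, ?_⟩
  · rw [← inv_smul_eq_add_centralProjection ht.1.ne', smul_inv_smul₀ ht.1.ne']
  · rintro ⟨t, ht, g, hg, rfl⟩
    rw [inner_smul_add_coe hw, centralProjection_smul_add hw ht.1.ne']
    exact ⟨ht, hg⟩

lemma pyramid_inter_eq {w : V} (G C : Set (ℝ ∙ w)ᗮ) {D : Set V} (h0 : 0 ∈ D)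
    (hD : ∀ x, 0 < ⟪w, x⟫_ℝ → (x ∈ D ↔ centralProjection w x ∈ C)) :
    pyramid w G ∩ D = pyramid w (G ∩ C) := by
  ext x
  constructor
  · rintro ⟨rfl | ⟨ht, hG⟩, hxD⟩
    exacts [.inl rfl, .inr ⟨ht, hG, (hD x ht.1).1 hxD⟩]
  · rintro (rfl | ⟨ht, hG, hC⟩)
    exacts [⟨.inl rfl, h0⟩, ⟨.inr ⟨ht, hG⟩, (hD x ht.1).2 hC⟩]

lemma pyramid_inter_halfSpace_le {w : V} (G : Set (ℝ ∙ w)ᗮ) (u : (ℝ ∙ w)ᗮ) (c : ℝ) :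
    pyramid w G ∩ {x | ⟪(u : V) - c • w, x⟫_ℝ ≤ 0} = pyramid w (G ∩ {g | ⟪u, g⟫_ℝ ≤ c}) :=
  pyramid_inter_eq G _ (Set.mem_ofPred.2 (inner_zero_right _).le) fun x hx => by
    rw [Set.mem_ofPred_eq, inner_sub_smul_eq_inner_mul hx.ne', ← smul_eq_mul,
      smul_nonpos_iff_nonpos_of_pos_left hx, sub_nonpos, Set.mem_ofPred_eq]

lemma pyramid_inter_halfSpace_ge {w : V} (G : Set (ℝ ∙ w)ᗮ) (u : (ℝ ∙ w)ᗮ) (c : ℝ) :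
    pyramid w G ∩ {x | 0 ≤ ⟪(u : V) - c • w, x⟫_ℝ} = pyramid w (G ∩ {g | c ≤ ⟪u, g⟫_ℝ}) :=
  pyramid_inter_eq G _ (Set.mem_ofPred.2 (inner_zero_right _).ge) fun x hx => by
    rw [Set.mem_ofPred_eq, inner_sub_smul_eq_inner_mul hx.ne', mul_nonneg_iff_of_pos_left hx,
      sub_nonneg, Set.mem_ofPred_eq]

lemma isCompact_pyramid {w : V} (hw : w ≠ 0) {G : Set (ℝ ∙ w)ᗮ} (hG : IsCompact G) :
    IsCompact (pyramid w G) := by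
  have heq : pyramid w G = insert 0
      ((fun q : ℝ × (ℝ ∙ w)ᗮ => q.1 • ((‖w‖ ^ 2)⁻¹ • w + (q.2 : V))) '' (Set.Icc 0 1 ×ˢ G)) := by
    ext x
    rw [mem_pyramid_iff hw]
    constructor
    · rintro (rfl | ⟨t, ht, g, hg, rfl⟩)
      exacts [.inl rfl, .inr ⟨(t, g), ⟨⟨ht.1.le, ht.2⟩, hg⟩, rfl⟩]
    · rintro (rfl | ⟨⟨t, g⟩, ⟨⟨ht0, ht1⟩, hg⟩, rfl⟩)
      · exact .inl rfl
      · rcases ht0.eq_or_lt with rfl | ht0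
        exacts [.inl (zero_smul ℝ _), .inr ⟨t, ⟨ht0, ht1⟩, g, hg, rfl⟩]
  exact heq ▸ ((isCompact_Icc.prod hG).image (by fun_prop)).insert 0

lemma convex_pyramid {w : V} (hw : w ≠ 0) {G : Set (ℝ ∙ w)ᗮ} (hG : Convex ℝ G) :
    Convex ℝ (pyramid w G) := by
  have hsmul : ∀ z ∈ pyramid w G, ∀ c : ℝ, 0 < c → c ≤ 1 → c • z ∈ pyramid w G := by
    simp only [mem_pyramid_iff hw]
    rintro z (rfl | ⟨t, ⟨ht0, ht1⟩, g, hg, rfl⟩) c hc0 hc1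
    · exact .inl (smul_zero c)
    · exact .inr ⟨c * t, ⟨mul_pos hc0 ht0, mul_le_one₀ hc1 ht0.le ht1⟩, g, hg, mul_smul _ _ _⟩
  rw [convex_iff_forall_pos]
  intro x hx y hy a b ha hb hab
  rcases (mem_pyramid_iff hw).1 hx with rfl | ⟨s, ⟨hs0, hs1⟩, g, hg, rfl⟩
  · simpa using hsmul y hy b hb (by linarith)
  rcases (mem_pyramid_iff hw).1 hy with rfl | ⟨t, ⟨ht0, ht1⟩, h, hh, rfl⟩
  · simpa using hsmul _ hx a ha (by linarith)
  have hpos : 0 < a * s + b * t := by positivity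
  refine (mem_pyramid_iff hw).2 <| .inr ⟨a * s + b * t, ⟨hpos, by nlinarith⟩,
    (a * s / (a * s + b * t)) • g + (b * t / (a * s + b * t)) • h,
    hG hg hh (by positivity) (by positivity) (by field_simp), ?_⟩
  simp only [Submodule.coe_add, Submodule.coe_smul, smul_add, smul_smul,
    mul_div_cancel₀ _ hpos.ne']
  module

lemma IsCompactConvex.pyramid {w : V} (hw : w ≠ 0) {G : Set (ℝ ∙ w)ᗮ} (hG : IsCompactConvex G) :
    IsCompactConvex (pyramid w G) :=
  ⟨isCompact_pyramid hw hG.isCompact, convex_pyramid hw hG.convex⟩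

lemma IsDissectionAdditive.comp_pyramid {f : Set V → ℝ} (hf : IsDissectionAdditive f) {w : V}
    (hw : w ≠ 0) : IsDissectionAdditive (fun G => f (pyramid w G)) where
  empty := hf.eq_zero_of_subset_hyperplane (IsCompactConvex.empty.pyramid hw) hw (c := 0) <| by
    rintro x (rfl | ⟨-, ⟨⟩⟩)
    exact inner_zero_right w
  eq_zero_of_subset_hyperplane G hG u hu c hGu :=
    hf.eq_zero_of_subset_hyperplane (hG.pyramid hw) (coe_sub_smul_ne_zero hu c) (c := 0) <| by
      rintro x (rfl | ⟨ht, hxG⟩)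
      · exact inner_zero_right _
      · have : ⟪u, centralProjection w x⟫_ℝ = c := hGu hxG
        rw [Set.mem_ofPred_eq, inner_sub_smul_eq_inner_mul ht.1.ne', this, sub_self, mul_zero]
  cut G hG u hu c := by
    rw [← pyramid_inter_halfSpace_le, ← pyramid_inter_halfSpace_ge]
    exact hf.cut (hG.pyramid hw) (coe_sub_smul_ne_zero hu c) 0

end Pyramids

section Orthoschemes

variable {V : Type*} [NormedAddCommGroup V] [InnerProductSpace ℝ V]

/-- A family of nonzero, pairwise orthogonal vectors. -/
structure IsOrthogonalSystem {ι : Type*} (w : ι → V) : Prop where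
  ne_zero : ∀ i, w i ≠ 0
  inner_eq_zero : Pairwise fun i j => ⟪w i, w j⟫_ℝ = 0

/-- The points whose coordinates `⟪w i, x⟫` decrease with `i` and lie between `a i` and `b i`. -/
def orthoBox {ι : Type*} [Preorder ι] (w : ι → V) (a b : ι → ℝ) : Set V :=
  {x | Antitone (fun i => ⟪w i, x⟫_ℝ) ∧ (fun i => ⟪w i, x⟫_ℝ) ∈ Set.Icc a b}

/-- For an orthogonal system of `n` vectors in dimension `n`, this is the orthoscheme with vertices
`∑ i < k, ‖w i‖⁻² • w i`, `0 ≤ k ≤ n`. -/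
def orthoscheme {ι : Type*} [Preorder ι] (w : ι → V) : Set V :=
  orthoBox w 0 1

lemma IsOrthogonalSystem.eq_zero [FiniteDimensional ℝ V] {ι : Type*} [Fintype ι] {w : ι → V}
    (hw : IsOrthogonalSystem w) (hcard : Fintype.card ι = Module.finrank ℝ V) {x : V}
    (hx : ∀ i, ⟪w i, x⟫_ℝ = 0) : x = 0 := by
  have hspan := (linearIndependent_of_ne_zero_of_inner_eq_zero hw.ne_zero
    hw.inner_eq_zero).span_eq_top_of_card_eq_finrank' hcard
  have hle : Submodule.span ℝ (Set.range w) ≤ (ℝ ∙ x)ᗮ := by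
    rw [Submodule.span_le, Set.range_subset_iff]
    exact fun i => Submodule.mem_orthogonal_singleton_iff_inner_left.2 (hx i)
  rw [hspan, top_le_iff] at hle
  exact inner_self_eq_zero.1
    (Submodule.mem_orthogonal_singleton_iff_inner_left.1 (hle ▸ Submodule.mem_top : x ∈ (ℝ ∙ x)ᗮ))

lemma IsOrthogonalSystem.cons {n : ℕ} {w : V} (hw : w ≠ 0) {w' : Fin n → (ℝ ∙ w)ᗮ}
    (hw' : IsOrthogonalSystem w') :
    IsOrthogonalSystem (Fin.cons w (fun i => (w' i : V)) : Fin (n + 1) → V) where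
  ne_zero := Fin.cases hw fun i => Submodule.coe_eq_zero.not.2 (hw'.ne_zero i)
  inner_eq_zero := by
    refine Fin.cases (Fin.cases (fun h => (h rfl).elim) fun j _ => ?_) fun i =>
      Fin.cases (fun _ => ?_) fun j hij => ?_
    · exact inner_coe_orthogonal_span_singleton w (w' j)
    · exact (real_inner_comm _ _).trans (inner_coe_orthogonal_span_singleton w (w' i))
    · exact hw'.inner_eq_zero (fun h => hij (congrArg Fin.succ h))

lemma mem_orthoscheme_cons {n : ℕ} {w : V} {w' : Fin n → V} {x : V} :
    x ∈ orthoscheme (Fin.cons w w' : Fin (n + 1) → V) ↔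
      ⟪w, x⟫_ℝ ∈ Set.Icc 0 1 ∧ Antitone (fun i => ⟪w' i, x⟫_ℝ) ∧
        ∀ i, ⟪w' i, x⟫_ℝ ∈ Set.Icc 0 ⟪w, x⟫_ℝ := by
  constructor
  · rintro ⟨hanti, h0, h1⟩
    exact ⟨⟨h0 0, h1 0⟩, fun i j hij => hanti (Fin.succ_le_succ_iff.2 hij),
      fun i => ⟨h0 i.succ, hanti (Fin.zero_le i.succ)⟩⟩
  · rintro ⟨hw, hanti, hw'⟩
    refine ⟨fun i j => ?_, Fin.cases hw.1 fun i => (hw' i).1,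
      Fin.cases hw.2 fun i => (hw' i).2.trans hw.2⟩
    refine Fin.cases (Fin.cases (fun _ => le_rfl) (fun j _ => (hw' j).2) j) (fun i => ?_) i
    refine Fin.cases (fun h => (Fin.succ_ne_zero i (Fin.le_zero_iff.1 h)).elim) (fun j h => ?_) j
    exact hanti (Fin.succ_le_succ_iff.1 h)

lemma pyramid_orthoscheme [FiniteDimensional ℝ V] {n : ℕ} (hn : Module.finrank ℝ V = n + 1) {w : V}
    (hw : w ≠ 0) {w' : Fin n → (ℝ ∙ w)ᗮ} (hw' : IsOrthogonalSystem w') :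
    pyramid w (orthoscheme w') = orthoscheme (Fin.cons w fun i => (w' i : V)) := by
  have hcone : ∀ x, 0 < ⟪w, x⟫_ℝ → ⟪w, x⟫_ℝ ≤ 1 → (centralProjection w x ∈ orthoscheme w' ↔
      x ∈ orthoscheme (Fin.cons w fun i => (w' i : V))) := fun x hx hx1 => by
    rw [mem_orthoscheme_cons]
    simp only [inner_eq_inner_mul_inner_centralProjection hx.ne', orthoscheme, orthoBox,
      Antitone, Set.mem_ofPred_eq, Set.mem_Icc, Pi.le_def, Pi.zero_apply, Pi.one_apply,
      mul_le_mul_iff_right₀ hx, mul_nonneg_iff_of_pos_left hx, mul_le_iff_le_one_right hx,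
      forall_and, hx.le, hx1, and_self, true_and]
  ext x
  constructor
  · rintro (rfl | ⟨hx, hG⟩)
    · simp [mem_orthoscheme_cons, antitone_const]
    · exact (hcone x hx.1 hx.2).1 hG
  · intro hx
    obtain ⟨⟨h0, h1⟩, -, hw'x⟩ := mem_orthoscheme_cons.1 hx
    rcases h0.eq_or_lt with h0 | h0
    · refine .inl ((hw'.cons hw).eq_zero ((Fintype.card_fin _).trans hn.symm) ?_)
      exact Fin.cases h0.symm fun i => le_antisymm ((hw'x i).2.trans h0.ge) (hw'x i).1
    · exact .inr ⟨⟨h0, h1⟩, (hcone x h0 h1).2 hx⟩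

end Orthoschemes

section OrthoschemeDissection

variable {V : Type*} [NormedAddCommGroup V] [InnerProductSpace ℝ V]

lemma eq_zero_of_forall_smul_mem {E : Type*} [NormedAddCommGroup E] [NormedSpace ℝ E] {B : Set E}
    (hB : Bornology.IsBounded B) {x : E} (h : ∀ t : ℝ, 0 ≤ t → t • x ∈ B) : x = 0 := by
  obtain ⟨R, hR, hBR⟩ := hB.subset_closedBall_lt 0 0
  by_contra hx
  have hx' : 0 < ‖x‖ := norm_pos_iff.2 hx
  have hle := mem_closedBall_zero_iff.1 (hBR (h ((R + 1) / ‖x‖) (by positivity)))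
  rw [norm_smul, Real.norm_of_nonneg (by positivity), div_mul_cancel₀ _ hx'.ne'] at hle
  linarith

lemma exists_cone_inter_eq_polyhedron {s : Set (V × ℝ)} (hs : s.Finite) (h0 : ∀ p ∈ s, 0 ≤ p.2) :
    ∃ (C : Set V) (T : Finset V), (∀ x ∈ C, ∀ t : ℝ, 0 ≤ t → t • x ∈ C) ∧
      polyhedron s = {x | x ∈ C ∧ ∀ v ∈ T, ⟪v, x⟫_ℝ ≤ 1} := by
  classical
  refine ⟨{x | ∀ p ∈ s, p.2 = 0 → ⟪p.1, x⟫_ℝ ≤ 0},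
    (hs.toFinset.filter fun p => 0 < p.2).image fun p => p.2⁻¹ • p.1, ?_, ?_⟩
  · intro x hx t ht p hp hp0
    rw [real_inner_smul_right]
    exact mul_nonpos_of_nonneg_of_nonpos ht (hx p hp hp0)
  · ext x
    have hscale : ∀ p : V × ℝ, 0 < p.2 → (⟪p.2⁻¹ • p.1, x⟫_ℝ ≤ 1 ↔ ⟪p.1, x⟫_ℝ ≤ p.2) :=
      fun p hp => by rw [real_inner_smul_left, inv_mul_le_iff₀ hp, mul_one]
    simp only [polyhedron, Set.mem_ofPred_eq, Finset.forall_mem_image, Finset.mem_filter,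
      Set.Finite.mem_toFinset, and_imp]
    constructor
    · exact fun h => ⟨fun p hp hp0 => hp0 ▸ h p hp, fun p hp hpos => (hscale p hpos).2 (h p hp)⟩
    · rintro ⟨hC, hT⟩ p hp
      rcases (h0 p hp).eq_or_lt with hp0 | hpos
      exacts [hp0 ▸ hC p hp hp0.symm, (hscale p hpos).1 (hT hp hpos)]

lemma eq_zero_of_mem_cone {C : Set V} {T : Finset V} (hC : ∀ x ∈ C, ∀ t : ℝ, 0 ≤ t → t • x ∈ C)
    (hbdd : Bornology.IsBounded {x | x ∈ C ∧ ∀ v ∈ T, ⟪v, x⟫_ℝ ≤ 1}) {x : V} (hx : x ∈ C)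
    (hT : ∀ v ∈ T, ⟪v, x⟫_ℝ ≤ 0) : x = 0 := by
  refine eq_zero_of_forall_smul_mem hbdd fun t ht => ⟨hC x hx t ht, fun v hv => ?_⟩
  rw [real_inner_smul_right]
  exact (mul_nonpos_of_nonneg_of_nonpos ht (hT v hv)).trans zero_le_one

lemma cone_inter_dominanceCell_eq_pyramid {C : Set V} {T : Finset V}
    (hC : ∀ x ∈ C, ∀ t : ℝ, 0 ≤ t → t • x ∈ C) (h0 : 0 ∈ C)
    (hbdd : Bornology.IsBounded {x | x ∈ C ∧ ∀ v ∈ T, ⟪v, x⟫_ℝ ≤ 1}) {w : V} (hw : w ∈ T) :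
    {x | x ∈ C ∧ ∀ v ∈ T, ⟪v, x⟫_ℝ ≤ 1} ∩ dominanceCell T w =
      pyramid w ((fun g : (ℝ ∙ w)ᗮ => (‖w‖ ^ 2)⁻¹ • w + (g : V)) ⁻¹'
        {x | x ∈ C ∧ ∀ v ∈ T, ⟪v, x⟫_ℝ ≤ 1}) := by
  have hscale : ∀ x (t : ℝ), 0 < t → (t⁻¹ • x ∈ C ↔ x ∈ C) := fun x t ht =>
    ⟨fun h => by simpa only [smul_inv_smul₀ ht.ne'] using hC _ h t ht.le,
      fun h => hC x h _ (inv_nonneg.2 ht.le)⟩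
  ext x
  simp only [pyramid, Set.mem_inter_iff, Set.mem_preimage, Set.mem_ofPred_eq, dominanceCell]
  constructor
  · rintro ⟨⟨hxC, hxT⟩, hxw⟩
    rcases le_or_gt ⟪w, x⟫_ℝ 0 with hle | hpos
    · exact .inl (eq_zero_of_mem_cone hC hbdd hxC fun v hv => (hxw v hv).trans hle)
    · refine .inr ⟨⟨hpos, hxT w hw⟩, ?_⟩
      rw [← inv_smul_eq_add_centralProjection hpos.ne', hscale x _ hpos]
      simp only [real_inner_smul_right, inv_mul_le_iff₀ hpos, mul_one]
      exact ⟨hxC, hxw⟩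
  · rintro (rfl | ⟨⟨hpos, hle⟩, h⟩)
    · simp [h0]
    · rw [← inv_smul_eq_add_centralProjection hpos.ne', hscale x _ hpos] at h
      simp only [real_inner_smul_right, inv_mul_le_iff₀ hpos, mul_one] at h
      exact ⟨⟨h.1, fun v hv => (h.2 v hv).trans hle⟩, h.2⟩

lemma preimage_add_polyhedron (U : Submodule ℝ V) [U.HasOrthogonalProjection] (a : V)
    (s : Set (V × ℝ)) :
    (fun g : U => a + (g : V)) ⁻¹' polyhedron s =
      polyhedron ((fun p => (U.orthogonalProjectionOnto p.1, p.2 - ⟪p.1, a⟫_ℝ)) '' s) := by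
  ext g
  simp only [polyhedron, Set.mem_preimage, Set.mem_ofPred_eq, Set.forall_mem_image, inner_add_right,
    Submodule.inner_orthogonalProjectionOnto_eq_of_mem_right, le_sub_iff_add_le']

lemma IsDissectionAdditive.eq_zero_of_subset_singleton_zero [Nontrivial V] {f : Set V → ℝ}
    (hf : IsDissectionAdditive f) {K : Set V} (hK : IsCompactConvex K) (h : K ⊆ {0}) : f K = 0 := by
  obtain ⟨u, hu⟩ := exists_ne (0 : V)
  refine hf.eq_zero_of_subset_hyperplane hK hu (c := 0) fun x hx => ?_
  rw [Set.mem_singleton_iff.1 (h hx)]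
  exact inner_zero_right u

lemma IsDissectionAdditive.polyhedron_eq_zero_of_nonneg [Nontrivial V] {f : Set V → ℝ}
    (hf : IsDissectionAdditive f)
    (hpyr : ∀ w ≠ 0, ∀ s : Set ((ℝ ∙ w)ᗮ × ℝ), s.Finite → IsCompact (polyhedron s) →
      f (pyramid w (polyhedron s)) = 0)
    {s : Set (V × ℝ)} (hs : s.Finite) (h0 : ∀ p ∈ s, 0 ≤ p.2) (hcpt : IsCompact (polyhedron s)) :
    f (polyhedron s) = 0 := by
  have hconv : IsCompactConvex (polyhedron s) := ⟨hcpt, convex_polyhedron s⟩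
  have hzero : (0 : V) ∈ polyhedron s := fun p hp => by rw [inner_zero_right]; exact h0 p hp
  obtain ⟨C, T, hC, hsC⟩ := exists_cone_inter_eq_polyhedron hs h0
  have hray : ∀ x ∈ polyhedron s, (∀ v ∈ T, ⟪v, x⟫_ℝ ≤ 0) → x = 0 := fun x hx =>
    eq_zero_of_mem_cone hC (hsC ▸ hcpt.isBounded) (hsC ▸ hx : x ∈ {x | x ∈ C ∧ _}).1
  rcases T.eq_empty_or_nonempty with rfl | hT
  · exact hf.eq_zero_of_subset_singleton_zero hconv fun x hx => hray x hx (by simp)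
  rw [hf.eq_sum_dominanceCell hT hconv]
  refine Finset.sum_eq_zero fun w hw => ?_
  rcases eq_or_ne w 0 with rfl | hw0
  · refine hf.eq_zero_of_subset_singleton_zero (hconv.inter_dominanceCell T 0) fun x hx => ?_
    exact hray x hx.1 fun v hv => (hx.2 v hv).trans (inner_zero_left x).le
  have hslice : IsCompact ((fun g : (ℝ ∙ w)ᗮ => (‖w‖ ^ 2)⁻¹ • w + (g : V)) ⁻¹' polyhedron s) :=
    ((Homeomorph.addLeft _).isClosedEmbedding.comp
      (Submodule.isClosed_orthogonal _).isClosedEmbedding_subtypeVal).isCompact_preimage hcpt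
  have hcell := cone_inter_dominanceCell_eq_pyramid hC (hsC ▸ hzero).1 (hsC ▸ hcpt.isBounded) hw
  rw [← hsC] at hcell
  rw [preimage_add_polyhedron] at hcell hslice
  rw [hcell]
  exact hpyr w hw0 _ (hs.image _) hslice

lemma IsDissectionAdditive.polyhedron_inter_eq_zero [Nontrivial V] {f : Set V → ℝ}
    (hf : IsDissectionAdditive f)
    (hpyr : ∀ w ≠ 0, ∀ s : Set ((ℝ ∙ w)ᗮ × ℝ), s.Finite → IsCompact (polyhedron s) →
      f (pyramid w (polyhedron s)) = 0)
    {s t : Set (V × ℝ)} (hs : s.Finite) (h0 : ∀ p ∈ s, 0 ≤ p.2) (hcpt : IsCompact (polyhedron s))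
    (ht : t.Finite) : f (polyhedron s ∩ polyhedron t) = 0 := by
  induction t, ht using Set.Finite.induction_on generalizing s with
  | empty =>
    rw [polyhedron_empty, Set.inter_univ, hf.polyhedron_eq_zero_of_nonneg hpyr hs h0 hcpt]
  | @insert p t _ _ ih =>
    have ih_insert : ∀ q : V × ℝ, 0 ≤ q.2 →
        f (polyhedron s ∩ polyhedron t ∩ {x | ⟪q.1, x⟫_ℝ ≤ q.2}) = 0 := fun q hq => by
      rw [Set.inter_right_comm, ← polyhedron_insert]
      refine ih (hs.insert q) (Set.forall_mem_insert.2 ⟨hq, h0⟩) ?_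
      exact polyhedron_insert q s ▸ hcpt.inter_right (isClosed_halfSpace_le _ _)
    rw [polyhedron_insert, ← Set.inter_assoc]
    rcases le_or_gt 0 p.2 with hp | hp
    · exact ih_insert p hp
    rcases eq_or_ne p.1 0 with hp0 | hp0
    · have hempty : {x : V | ⟪p.1, x⟫_ℝ ≤ p.2} = ∅ := by
        simp only [hp0, inner_zero_left, hp.not_ge, Set.ofPred_false]
      rw [hempty, Set.inter_empty, hf.empty]
    · have hconv : IsCompactConvex (polyhedron s ∩ polyhedron t) :=
        IsCompactConvex.inter_closed ⟨hcpt, convex_polyhedron s⟩ (isClosed_polyhedron t)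
          (convex_polyhedron t)
      have hcut := hf.cut hconv hp0 p.2
      have hneg := ih_insert (-p.1, -p.2) (neg_nonneg.2 hp.le)
      simp only [inner_neg_left, neg_le_neg_iff] at hneg
      rwa [ih hs h0 hcpt, hneg, add_zero, eq_comm] at hcut

theorem IsDissectionAdditive.polyhedron_eq_zero {n : ℕ} : ∀ {V : Type*} [NormedAddCommGroup V]
    [InnerProductSpace ℝ V] [FiniteDimensional ℝ V], Module.finrank ℝ V = n →
    ∀ {f : Set V → ℝ}, IsDissectionAdditive f →
      (∀ w : Fin n → V, IsOrthogonalSystem w → f (orthoscheme w) = 0) →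
      ∀ {s : Set (V × ℝ)}, s.Finite → IsCompact (polyhedron s) → f (polyhedron s) = 0 := by
  induction n with
  | zero =>
    intro V _ _ _ hn f hf hortho s _ _
    have : Subsingleton V := Module.finrank_zero_iff.1 hn
    have huniv : orthoscheme (Fin.elim0 : Fin 0 → V) = Set.univ :=
      Set.eq_univ_of_forall fun x => ⟨fun i => i.elim0, fun i => i.elim0, fun i => i.elim0⟩
    rcases (polyhedron s).eq_empty_or_nonempty with h | h
    · rw [h, hf.empty]
    · rw [Subsingleton.eq_univ_of_nonempty h, ← huniv]
      exact hortho _ ⟨fun i => i.elim0, fun i => i.elim0⟩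
  | succ n ih =>
    intro V _ _ _ hn f hf hortho s hs hcpt
    have : Nontrivial V := Module.nontrivial_of_finrank_eq_succ hn
    have : Fact (Module.finrank ℝ V = n + 1) := ⟨hn⟩
    obtain ⟨t, ht, h0, htcpt, hst⟩ := exists_isCompact_polyhedron_superset hcpt.isBounded
    rw [← Set.inter_eq_right.2 hst]
    refine hf.polyhedron_inter_eq_zero (fun w hw s' hs' hcpt' => ?_) ht h0 htcpt hs
    refine ih (Submodule.finrank_orthogonal_span_singleton hw) (hf.comp_pyramid hw)
      (fun w' hw' => ?_) hs' hcpt'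
    rw [pyramid_orthoscheme hn hw hw']
    exact hortho _ (hw'.cons hw)

theorem IsSimpleValuation.eq_zero_of_orthoscheme [FiniteDimensional ℝ V] {f : Set V → ℝ}
    (hf : IsSimpleValuation f)
    (hortho : ∀ w : Fin (Module.finrank ℝ V) → V, IsOrthogonalSystem w → f (orthoscheme w) = 0)
    {K : Set V} (hK : IsCompactConvex K) : f K = 0 := by
  obtain ⟨s, hs, hcpt, hanti, rfl⟩ := exists_antitone_polyhedron_iInter_eq hK
  have hlim := hf.tendsto_iInter (fun n => ⟨hcpt n, convex_polyhedron (s n)⟩) hanti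
  simp only [hf.isDissectionAdditive.polyhedron_eq_zero rfl hortho (hs _) (hcpt _)] at hlim
  exact tendsto_nhds_unique hlim tendsto_const_nhds

end OrthoschemeDissection

section Dilation

variable {V : Type*} [NormedAddCommGroup V] [InnerProductSpace ℝ V] {f : Set V → ℝ}

/-- Vanishing on sums of two compact convex sets that lie in complementary orthogonal subspaces,
both of them nonzero. -/
def VanishesOnOrthogonalSums (f : Set V → ℝ) : Prop :=
  ∀ ⦃W : Submodule ℝ V⦄, W ≠ ⊥ → W ≠ ⊤ → ∀ ⦃L₁ L₂ : Set V⦄, IsCompactConvex L₁ →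
    IsCompactConvex L₂ → L₁ ⊆ W → L₂ ⊆ (Wᗮ : Submodule ℝ V) → f (L₁ + L₂) = 0

section OrthoBox

variable {ι : Type*} {w : ι → V}

lemma IsOrthogonalSystem.mem_span_image_orthogonal (hw : IsOrthogonalSystem w) {s : Set ι} {i : ι}
    (hi : i ∉ s) : w i ∈ (Submodule.span ℝ (w '' s))ᗮ := by
  have hle : Submodule.span ℝ (w '' s) ≤ (ℝ ∙ w i)ᗮ := by
    rw [Submodule.span_le, Set.image_subset_iff]
    exact fun k hk => Submodule.mem_orthogonal_singleton_iff_inner_left.2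
      (hw.inner_eq_zero fun h => hi (h ▸ hk))
  exact fun u hu => Submodule.mem_orthogonal_singleton_iff_inner_left.1 (hle hu)

lemma inner_starProjection_add_of_mem {W : Submodule ℝ V} [W.HasOrthogonalProjection] {u : V}
    (hu : u ∈ W) (x y : V) : ⟪u, W.starProjection x + Wᗮ.starProjection y⟫_ℝ = ⟪u, x⟫_ℝ := by
  rw [inner_add_right, Submodule.inner_right_of_mem_orthogonal hu
    (Submodule.starProjection_apply_mem _ y), add_zero,
    ← Submodule.inner_starProjection_left_eq_right, Submodule.starProjection_eq_self_iff.2 hu]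

lemma inner_starProjection_add_of_mem_orthogonal {W : Submodule ℝ V} [W.HasOrthogonalProjection]
    {u : V} (hu : u ∈ Wᗮ) (x y : V) :
    ⟪u, W.starProjection x + Wᗮ.starProjection y⟫_ℝ = ⟪u, y⟫_ℝ := by
  rw [inner_add_right, Submodule.inner_left_of_mem_orthogonal
    (Submodule.starProjection_apply_mem _ x) hu, zero_add,
    ← Submodule.inner_starProjection_left_eq_right, Submodule.starProjection_eq_self_iff.2 hu]

lemma IsOrthogonalSystem.exists_inner_eq_one [Finite ι] (hw : IsOrthogonalSystem w) :
    ∃ v : V, ∀ i, ⟪w i, v⟫_ℝ = 1 := by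
  have := Fintype.ofFinite ι
  classical
  refine ⟨∑ i, (⟪w i, w i⟫_ℝ)⁻¹ • w i, fun i => ?_⟩
  rw [inner_sum, Finset.sum_eq_single_of_mem i (Finset.mem_univ i) fun j _ hj => by
    rw [real_inner_smul_right, hw.inner_eq_zero hj.symm, mul_zero], real_inner_smul_right,
    inv_mul_cancel₀ (inner_self_ne_zero.2 (hw.ne_zero i))]

variable [Preorder ι]

lemma isCompactConvex_orthoBox [FiniteDimensional ℝ V] [Fintype ι] (hw : IsOrthogonalSystem w)
    (hcard : Fintype.card ι = Module.finrank ℝ V) (a b : ι → ℝ) :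
    IsCompactConvex (orthoBox w a b) := by
  let T : V →ₗ[ℝ] ι → ℝ := LinearMap.pi fun i => innerₗ V (w i)
  have hT : IsClosedEmbedding T := LinearMap.isClosedEmbedding_of_injective <|
    LinearMap.ker_eq_bot'.2 fun x hx => hw.eq_zero hcard (congrFun hx)
  have heq : orthoBox w a b = T ⁻¹' ({y | Antitone y} ∩ Set.Icc a b) := rfl
  have hanti : Convex ℝ {y : ι → ℝ | Antitone y} := fun y hy z hz s t hs ht _ i j hij =>
    add_le_add (mul_le_mul_of_nonneg_left (hy hij) hs) (mul_le_mul_of_nonneg_left (hz hij) ht)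
  exact ⟨heq ▸ hT.isCompact_preimage (isCompact_Icc.inter_left isClosed_antitone),
    heq ▸ (hanti.inter (convex_Icc a b)).linear_preimage T⟩

lemma smul_orthoBox {c : ℝ} (hc : 0 < c) (a b : ι → ℝ) :
    c • orthoBox w a b = orthoBox w (c • a) (c • b) := by
  ext x
  simp only [Set.mem_smul_set_iff_inv_smul_mem₀ hc.ne', orthoBox, Set.mem_ofPred_eq, Antitone,
    real_inner_smul_right, Set.mem_Icc, Pi.le_def, Pi.smul_apply, smul_eq_mul,
    mul_le_mul_iff_right₀ (inv_pos.2 hc), le_inv_mul_iff₀ hc, inv_mul_le_iff₀ hc]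

lemma vadd_orthoBox {v : V} (hv : ∀ i, ⟪w i, v⟫_ℝ = 1) (a b : ι → ℝ) :
    v +ᵥ orthoBox w a b = orthoBox w (1 + a) (1 + b) := by
  ext x
  simp only [Set.mem_vadd_set_iff_neg_vadd_mem, vadd_eq_add, orthoBox, Set.mem_ofPred_eq, Antitone,
    inner_add_right, inner_neg_right, hv, Set.mem_Icc, Pi.le_def, Pi.add_apply, Pi.one_apply,
    le_neg_add_iff_add_le, neg_add_le_iff_le_add, add_neg_cancel_left]

lemma orthoBox_eq_add_of_isLowerSet [FiniteDimensional ℝ V] (hw : IsOrthogonalSystem w) {s : Set ι}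
    (hs : IsLowerSet s) {a b : ι → ℝ} (hab : ∀ i ∈ s, ∀ k ∉ s, b k ≤ a i) :
    orthoBox w a b =
      (Submodule.span ℝ (w '' s)).starProjection '' orthoBox w a b +
        (Submodule.span ℝ (w '' s))ᗮ.starProjection '' orthoBox w a b := by
  set W := Submodule.span ℝ (w '' s)
  refine Set.Subset.antisymm (fun x hx => Set.mem_add.2 ⟨W.starProjection x,
    Set.mem_image_of_mem _ hx, Wᗮ.starProjection x, Set.mem_image_of_mem _ hx,
    W.starProjection_add_starProjection_orthogonal x⟩) ?_
  rintro _ ⟨_, ⟨x, ⟨hx, hax, hxb⟩, rfl⟩, _, ⟨y, ⟨hy, hay, hyb⟩, rfl⟩, rfl⟩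
  have hin : ∀ i ∈ s, ⟪w i, W.starProjection x + Wᗮ.starProjection y⟫_ℝ = ⟪w i, x⟫_ℝ := fun i hi =>
    inner_starProjection_add_of_mem (Submodule.subset_span (Set.mem_image_of_mem w hi)) x y
  have hout : ∀ i ∉ s, ⟪w i, W.starProjection x + Wᗮ.starProjection y⟫_ℝ = ⟪w i, y⟫_ℝ := fun i hi =>
    inner_starProjection_add_of_mem_orthogonal (hw.mem_span_image_orthogonal hi) x y
  refine ⟨fun i k hik => ?_, fun i => ?_, fun i => ?_⟩
  · by_cases hk : k ∈ s
    · simpa only [hin i (hs hik hk), hin k hk] using hx hik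
    by_cases hi : i ∈ s
    · simpa only [hin i hi, hout k hk] using (hyb k).trans ((hab i hi k hk).trans (hax i))
    · simpa only [hout i hi, hout k hk] using hy hik
  all_goals by_cases hi : i ∈ s
  · simpa only [hin i hi] using hax i
  · simpa only [hout i hi] using hay i
  · simpa only [hin i hi] using hxb i
  · simpa only [hout i hi] using hyb i

lemma VanishesOnOrthogonalSums.orthoBox_eq_zero [FiniteDimensional ℝ V] [Fintype ι]
    (hf : VanishesOnOrthogonalSums f) (hw : IsOrthogonalSystem w)
    (hcard : Fintype.card ι = Module.finrank ℝ V) {s : Set ι} (hs : IsLowerSet s)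
    (hne : s.Nonempty) (hne' : sᶜ.Nonempty) {a b : ι → ℝ} (hab : ∀ i ∈ s, ∀ k ∉ s, b k ≤ a i) :
    f (orthoBox w a b) = 0 := by
  obtain ⟨i, hi⟩ := hne
  obtain ⟨k, hk⟩ := hne'
  have hbox := isCompactConvex_orthoBox hw hcard a b
  rw [orthoBox_eq_add_of_isLowerSet hw hs hab]
  refine hf (fun hbot => hw.ne_zero i ?_) (fun htop => hw.ne_zero k ?_) (hbox.image _)
    (hbox.image _) (Set.image_subset_iff.2 fun x _ => Submodule.starProjection_apply_mem _ x)
    (Set.image_subset_iff.2 fun x _ => Submodule.starProjection_apply_mem _ x)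
  · exact (Submodule.mem_bot ℝ).1 (hbot ▸ Submodule.subset_span ⟨i, hi, rfl⟩)
  · have := hw.mem_span_image_orthogonal hk
    rwa [htop, Submodule.top_orthogonal_eq_bot, Submodule.mem_bot] at this

end OrthoBox

section Doubling

variable {n : ℕ} {w : Fin n → V}

/-- The vector in `ℝⁿ` whose first `j` coordinates are `1` and the others `0`. -/
def headIndicator (n j : ℕ) (i : Fin n) : ℝ := if (i : ℕ) < j then 1 else 0

lemma headIndicator_of_lt {j : ℕ} {i : Fin n} (h : (i : ℕ) < j) : headIndicator n j i = 1 :=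
  if_pos h

lemma headIndicator_of_le {j : ℕ} {i : Fin n} (h : j ≤ (i : ℕ)) : headIndicator n j i = 0 :=
  if_neg (not_lt.2 h)

lemma headIndicator_zero : headIndicator n 0 = 0 :=
  funext fun _ => headIndicator_of_le (Nat.zero_le _)

lemma headIndicator_self : headIndicator n n = 1 := funext fun i => headIndicator_of_lt i.2

lemma headIndicator_le_one (j : ℕ) (i : Fin n) : headIndicator n j i ≤ 1 := by
  unfold headIndicator
  split_ifs <;> norm_num

lemma orthoBox_headIndicator_inter_le (w : Fin n → V) (j : Fin n) :
    orthoBox w (headIndicator n j) 2 ∩ {x | ⟪w j, x⟫_ℝ ≤ 1} =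
      orthoBox w (headIndicator n j) (1 + headIndicator n j) := by
  ext x
  refine ⟨fun ⟨⟨hx, ha, hb⟩, hj⟩ => ⟨hx, ha, fun i => ?_⟩, fun ⟨hx, ha, hb⟩ => ⟨⟨hx, ha, fun i =>
    (hb i).trans ?_⟩, ?_⟩⟩
  · rcases lt_or_ge i j with hij | hij
    · simpa only [Pi.add_apply, Pi.one_apply, headIndicator_of_lt (Fin.lt_def.1 hij),
        one_add_one_eq_two, Pi.ofNat_apply] using hb i
    · simpa only [Pi.add_apply, Pi.one_apply, headIndicator_of_le (Fin.le_def.1 hij), add_zero]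
        using (hx hij).trans hj
  · simpa only [Pi.add_apply, Pi.one_apply, one_add_one_eq_two, Pi.ofNat_apply] using
      add_le_add_right (headIndicator_le_one j i) 1
  · simpa only [Pi.add_apply, Pi.one_apply, headIndicator_of_le le_rfl, add_zero,
      Set.mem_ofPred_eq] using hb j

lemma orthoBox_headIndicator_inter_ge (w : Fin n → V) (j : Fin n) :
    orthoBox w (headIndicator n j) 2 ∩ {x | 1 ≤ ⟪w j, x⟫_ℝ} =
      orthoBox w (headIndicator n (j + 1)) 2 := by
  ext x
  refine ⟨fun ⟨⟨hx, ha, hb⟩, hj⟩ => ⟨hx, fun i => ?_, hb⟩, fun ⟨hx, ha, hb⟩ =>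
    ⟨⟨hx, fun i => ?_, hb⟩, headIndicator_of_lt (Nat.lt_succ_self j) ▸ ha j⟩⟩
  · rcases le_or_gt i j with hij | hij
    · exact (headIndicator_le_one _ i).trans (hj.trans (hx hij))
    · exact (headIndicator_of_le (Nat.succ_le_of_lt hij)).trans_le
        ((headIndicator_of_le (Nat.le_of_lt hij)).symm.trans_le (ha i))
  · refine le_trans ?_ (ha i)
    unfold headIndicator
    split_ifs <;> first | omega | norm_num

lemma IsDissectionAdditive.orthoBox_headIndicator [FiniteDimensional ℝ V]
    (hf : IsDissectionAdditive f) (hw : IsOrthogonalSystem w) (hn : n = Module.finrank ℝ V)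
    (j : Fin n) :
    f (orthoBox w (headIndicator n j) 2) =
      f (orthoBox w (headIndicator n j) (1 + headIndicator n j)) +
        f (orthoBox w (headIndicator n (j + 1)) 2) := by
  rw [hf.cut (isCompactConvex_orthoBox hw ((Fintype.card_fin n).trans hn) _ _) (hw.ne_zero j) 1,
    orthoBox_headIndicator_inter_le, orthoBox_headIndicator_inter_ge]

lemma orthoBox_headIndicator_self_eq (hw : IsOrthogonalSystem w) :
    ∃ v : V, orthoBox w (headIndicator n n) 2 = v +ᵥ orthoscheme w := by
  obtain ⟨v, hv⟩ := hw.exists_inner_eq_one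
  refine ⟨v, ?_⟩
  rw [orthoscheme, vadd_orthoBox hv, headIndicator_self, add_zero, one_add_one_eq_two]

-- Cut by the hyperplanes `⟪w j, x⟫ = 1`, the doubled orthoscheme falls into two translates of the
-- original one and intermediate pieces that are orthogonal sums.
lemma smul_two_orthoscheme [FiniteDimensional ℝ V] (hf : IsDissectionAdditive f)
    (ht : IsTranslationInvariant f) (ho : VanishesOnOrthogonalSums f) (hw : IsOrthogonalSystem w)
    (hn : n = Module.finrank ℝ V) (hpos : 0 < n) :
    f ((2 : ℝ) • orthoscheme w) = 2 * f (orthoscheme w) := by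
  have hcard := (Fintype.card_fin n).trans hn
  have htail : ∀ j, 1 ≤ j → j ≤ n →
      f (orthoBox w (headIndicator n 1) 2) = f (orthoBox w (headIndicator n j) 2) := by
    refine Nat.le_induction (fun _ => rfl) fun j hj ih hjn => ?_
    rw [ih (Nat.le_of_succ_le hjn), hf.orthoBox_headIndicator hw hn ⟨j, hjn⟩,
      ho.orthoBox_eq_zero hw hcard (s := {i | (i : ℕ) < j})
        (fun i k hki hi => lt_of_le_of_lt (Fin.le_def.1 hki) hi) ⟨⟨0, hpos⟩, hj⟩
        ⟨⟨j, hjn⟩, lt_irrefl j⟩ fun i hi k hk => ?_, zero_add]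
    rw [Pi.add_apply, Pi.one_apply, headIndicator_of_lt hi, headIndicator_of_le (not_lt.1 hk),
      add_zero]
  obtain ⟨v, hv⟩ := orthoBox_headIndicator_self_eq hw
  calc f ((2 : ℝ) • orthoscheme w)
      = f (orthoBox w (headIndicator n 0) 2) := by
        rw [orthoscheme, smul_orthoBox two_pos, headIndicator_zero, smul_zero]
        congr 2
        ext i
        simp
    _ = f (orthoscheme w) + f (orthoBox w (headIndicator n 1) 2) := by
        rw [hf.orthoBox_headIndicator hw hn ⟨0, hpos⟩, headIndicator_zero, add_zero, orthoscheme]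
    _ = f (orthoscheme w) + f (v +ᵥ orthoscheme w) := by rw [htail n hpos le_rfl, hv]
    _ = 2 * f (orthoscheme w) := by
        rw [orthoscheme, ht (isCompactConvex_orthoBox hw hcard 0 1) v, two_mul]

end Doubling

lemma IsSimpleValuation.comp_smul (hf : IsSimpleValuation f) {c : ℝ} (hc : c ≠ 0) :
    IsSimpleValuation (fun K => f (c • K)) where
  toIsConvexValuation := hf.toIsConvexValuation.comp_smul hc
  eq_zero_of_subset_hyperplane K hK u hu d hKd := by
    refine hf.eq_zero_of_subset_hyperplane (hK.smul c) hu (c := c * d) ?_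
    rintro _ ⟨x, hx, rfl⟩
    rw [Set.mem_ofPred_eq, real_inner_smul_right, hKd hx]

lemma IsSimpleValuation.add_const_mul {g : Set V → ℝ} (hf : IsSimpleValuation f)
    (hg : IsSimpleValuation g) (c : ℝ) : IsSimpleValuation (fun K => f K + c * g K) where
  toIsConvexValuation := hf.add (hg.const_mul c)
  eq_zero_of_subset_hyperplane K hK u hu d hKd := by
    rw [hf.eq_zero_of_subset_hyperplane hK hu hKd, hg.eq_zero_of_subset_hyperplane hK hu hKd,
      mul_zero, add_zero]

theorem IsSimpleValuation.smul_two [FiniteDimensional ℝ V] [Nontrivial V]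
    (hf : IsSimpleValuation f) (ht : IsTranslationInvariant f) (ho : VanishesOnOrthogonalSums f)
    {K : Set V} (hK : IsCompactConvex K) : f ((2 : ℝ) • K) = 2 * f K := by
  have hdefect := ((hf.comp_smul two_ne_zero).add_const_mul hf (-2)).eq_zero_of_orthoscheme
    (fun w hw => ?_) hK
  · linarith
  · linarith [smul_two_orthoscheme hf.isDissectionAdditive ht ho hw rfl Module.finrank_pos]

end Dilation

section Dilates

variable {V : Type*} [NormedAddCommGroup V] [NormedSpace ℝ V] {f : Set V → ℝ} {K : Set V}

lemma IsCompactConvex.smul_subset_smul (hK : IsCompactConvex K) (h0 : (0 : V) ∈ K) {a b : ℝ}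
    (ha : 0 ≤ a) (hab : a ≤ b) : a • K ⊆ b • K := by
  rcases ha.eq_or_lt with rfl | hpos
  · exact (Set.zero_smul_set_subset K).trans (Set.zero_subset.2 (Set.zero_mem_smul_set h0))
  rintro _ ⟨k, hk, rfl⟩
  have hb := hpos.trans_le hab
  refine ⟨(a / b) • k, hK.convex.smul_mem_of_zero_mem h0 hk
    ⟨by positivity, (div_le_one hb).2 hab⟩, ?_⟩
  simp only [smul_smul, mul_div_cancel₀ a hb.ne']

lemma iInter_smul_of_isCompact_of_tendsto (hK : IsCompact K) {c : ℕ → ℝ} {c₀ : ℝ}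
    (hc : Tendsto c atTop (𝓝 c₀)) (hmono : ∀ n, c₀ • K ⊆ c n • K) : ⋂ n, c n • K = c₀ • K := by
  refine Set.Subset.antisymm (fun x hx => ?_) (Set.subset_iInter hmono)
  choose k hk hkx using fun n => Set.mem_iInter.1 hx n
  obtain ⟨k₀, hk₀, φ, hφ, hlim⟩ := hK.tendsto_subseq hk
  have hx₀ := (hc.comp hφ.tendsto_atTop).smul hlim
  refine ⟨k₀, hk₀, tendsto_nhds_unique hx₀ (tendsto_const_nhds.congr fun n => ?_)⟩
  exact (hkx (φ n)).symm

lemma IsConvexValuation.tendsto_smul (hf : IsConvexValuation f) (hK : IsCompactConvex K)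
    (h0 : (0 : V) ∈ K) {c : ℕ → ℝ} {c₀ : ℝ} (hc₀ : 0 ≤ c₀) (hanti : Antitone c)
    (hc : Tendsto c atTop (𝓝 c₀)) : Tendsto (fun n => f (c n • K)) atTop (𝓝 (f (c₀ • K))) := by
  have hle := hanti.le_of_tendsto hc
  rw [← iInter_smul_of_isCompact_of_tendsto hK.isCompact hc fun n =>
    hK.smul_subset_smul h0 hc₀ (hle n)]
  exact hf.tendsto_iInter (fun n => hK.smul _) fun m n hmn =>
    hK.smul_subset_smul h0 (hc₀.trans (hle n)) (hanti hmn)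

end Dilates

section MinkowskiAdditivity

section Defect

/-- The failure `f (K + L) - f K - f L` of Minkowski additivity. The Euler characteristic makes it
a valuation in `L`, the empty set included. -/
def minkowskiDefect {G : Type*} [Add G] (f : Set G → ℝ) (K L : Set G) : ℝ :=
  f (L + K) + (-1 * f L + -f K * eulerChar L)

lemma minkowskiDefect_of_nonempty {G : Type*} [AddCommMonoid G] (f : Set G → ℝ) (K : Set G)
    {L : Set G} (hL : L.Nonempty) : minkowskiDefect f K L = f (K + L) - f K - f L := by
  rw [minkowskiDefect, eulerChar_of_nonempty hL, add_comm L K]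
  ring

lemma minkowskiDefect_comm {G : Type*} [AddCommMonoid G] (f : Set G → ℝ) {K L : Set G}
    (hK : K.Nonempty) (hL : L.Nonempty) :
    minkowskiDefect f K L = minkowskiDefect f L K := by
  rw [minkowskiDefect_of_nonempty f K hL, minkowskiDefect_of_nonempty f L hK, add_comm L K]
  ring

variable {V W : Type*} [NormedAddCommGroup V] [NormedSpace ℝ V]
  [NormedAddCommGroup W] [NormedSpace ℝ W] {f : Set V → ℝ} {K L : Set V}

protected lemma IsConvexValuation.minkowskiDefect (hf : IsConvexValuation f)
    (hK : IsCompactConvex K) : IsConvexValuation (minkowskiDefect f K) := by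
  have hadd : IsConvexValuation fun L => f (L + K) := by
    simpa only [ContinuousLinearMap.coe_id', Set.image_id] using
      hf.comp_image_add (A := ContinuousLinearMap.id ℝ V) Function.injective_id hK
  exact hadd.add ((hf.const_mul _).add (IsConvexValuation.eulerChar.const_mul _))

lemma IsTranslationInvariant.comp_image (ht : IsTranslationInvariant f) (A : W →L[ℝ] V) :
    IsTranslationInvariant fun L => f (A '' L) := fun L hL w => by
  simp only [Set.image_vadd_distrib, ht (hL.image A)]

protected lemma IsTranslationInvariant.minkowskiDefect (ht : IsTranslationInvariant f)
    (hK : IsCompactConvex K) : IsTranslationInvariant (minkowskiDefect f K) := fun L hL v => by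
  rcases L.eq_empty_or_nonempty with rfl | hne
  · rw [Set.vadd_set_empty]
  rw [minkowskiDefect_of_nonempty f K hne.vadd_set, minkowskiDefect_of_nonempty f K hne,
    add_comm K, add_comm K, vadd_add_assoc, ht (hL.add hK), ht hL]

lemma minkowskiDefect_smul_smul {c : ℝ} (h : ∀ ⦃M : Set V⦄, IsCompactConvex M → f (c • M) = c * f M)
    (hK : IsCompactConvex K) (hL : IsCompactConvex L) (hne : L.Nonempty) :
    minkowskiDefect f (c • K) (c • L) = c * minkowskiDefect f K L := by
  rw [minkowskiDefect_of_nonempty _ _ hne.smul_set, minkowskiDefect_of_nonempty _ _ hne, ← smul_add,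
    h (hK.add hL), h hK, h hL]
  ring

lemma apply_singleton_zero_of_smul_two
    (htwo : ∀ ⦃M : Set V⦄, IsCompactConvex M → f ((2 : ℝ) • M) = 2 * f M) : f {0} = 0 := by
  have := htwo (IsCompactConvex.singleton (0 : V))
  rw [Set.smul_set_singleton, smul_zero] at this
  linarith

/-- Additivity under Minkowski addition. -/
def IsMinkowskiAdditive (f : Set V → ℝ) : Prop :=
  ∀ ⦃K L : Set V⦄, IsCompactConvex K → K.Nonempty → IsCompactConvex L → L.Nonempty →
    f (K + L) = f K + f L

/-- Additivity under Minkowski addition when one summand lies in the subspace `W`. -/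
def IsAdditiveAlong (f : Set V → ℝ) (W : Submodule ℝ V) : Prop :=
  ∀ ⦃K L : Set V⦄, IsCompactConvex K → K.Nonempty → IsCompactConvex L → L.Nonempty → L ⊆ W →
    f (K + L) = f K + f L

lemma IsCompactConvex.exists_image_subtype {W : Submodule ℝ V} [FiniteDimensional ℝ W] {L : Set V}
    (hL : IsCompactConvex L) (hLW : L ⊆ W) :
    ∃ M : Set W, IsCompactConvex M ∧ W.subtypeL '' M = L :=
  ⟨W.subtypeL ⁻¹' L, ⟨W.closed_of_finiteDimensional.isClosedEmbedding_subtypeVal.isCompact_preimage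
    hL.isCompact, hL.convex.linear_preimage W.subtype⟩,
    Subtype.image_preimage_coe (W : Set V) L |>.trans (Set.inter_eq_right.2 hLW)⟩

lemma IsAdditiveAlong.add_image {W : Submodule ℝ V} {U : Submodule ℝ W}
    (hU : IsAdditiveAlong f (U.map W.subtype)) {K : Set V} (hK : IsCompactConvex K)
    (hne : K.Nonempty) {L : Set W} (hL : IsCompactConvex L) (hne' : L.Nonempty) (hLU : L ⊆ U) :
    f (K + W.subtypeL '' L) = f K + f (W.subtypeL '' L) :=
  hU hK hne (hL.image _) (hne'.image _) (Set.image_mono hLU)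

end Defect

variable {V : Type*} [NormedAddCommGroup V] [InnerProductSpace ℝ V] {f : Set V → ℝ}

section Step

variable {W : Submodule ℝ V}
  (hadd : ∀ U : Submodule ℝ W, U ≠ ⊤ → IsAdditiveAlong f (U.map W.subtype))
include hadd

lemma IsConvexValuation.isSimpleValuation_minkowskiDefect (hf : IsConvexValuation f)
    (ht : IsTranslationInvariant f) {K : Set V} (hK : IsCompactConvex K) (hne : K.Nonempty) :
    IsSimpleValuation fun L : Set W => minkowskiDefect f K (W.subtypeL '' L) where
  toIsConvexValuation := (hf.minkowskiDefect hK).comp_image (A := W.subtypeL) W.injective_subtype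
  eq_zero_of_subset_hyperplane L hL u hu c hLu := by
    rcases L.eq_empty_or_nonempty with rfl | ⟨l, hl⟩
    · exact ((hf.minkowskiDefect hK).comp_image (A := W.subtypeL) W.injective_subtype).empty
    have hU : (ℝ ∙ u)ᗮ ≠ ⊤ := fun h => hu (by simpa using h)
    have hLU : (-l) +ᵥ L ⊆ (ℝ ∙ u)ᗮ := by
      rintro _ ⟨x, hx, rfl⟩
      refine Submodule.mem_orthogonal_singleton_iff_inner_right.2 ?_
      simp only [vadd_eq_add]
      rw [inner_add_right, inner_neg_right, hLu hx, hLu hl, neg_add_cancel]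
    have hne' : ((-l) +ᵥ L).Nonempty := ⟨_, l, hl, rfl⟩
    refine ((ht.minkowskiDefect hK).comp_image W.subtypeL hL (-l)).symm.trans ?_
    simp only [minkowskiDefect_of_nonempty _ _ (hne'.image _),
      (hadd _ hU).add_image hK hne (hL.vadd _) hne' hLU]
    ring

lemma vanishesOnOrthogonalSums_minkowskiDefect (hf : f ∅ = 0) {K : Set V}
    (hK : IsCompactConvex K) (hne : K.Nonempty) :
    VanishesOnOrthogonalSums fun L : Set W => minkowskiDefect f K (W.subtypeL '' L) := by
  intro U hbot htop L₁ L₂ hL₁ hL₂ h₁ h₂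
  have hbot' : Uᗮ ≠ ⊤ := fun h => hbot ((Submodule.orthogonal_eq_top_iff U).1 h)
  have hempty : minkowskiDefect f K ∅ = 0 := by
    rw [minkowskiDefect, Set.empty_add, hf, eulerChar_empty, mul_zero, mul_zero, add_zero, add_zero]
  rcases L₁.eq_empty_or_nonempty with rfl | hne₁
  · simp only [Set.empty_add, Set.image_empty, hempty]
  rcases L₂.eq_empty_or_nonempty with rfl | hne₂
  · simp only [Set.add_empty, Set.image_empty, hempty]
  have hadd₂ : ∀ ⦃M : Set V⦄, IsCompactConvex M → M.Nonempty →
      f (M + W.subtypeL '' L₂) = f M + f (W.subtypeL '' L₂) :=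
    fun M hM hneM => (hadd _ hbot').add_image hM hneM hL₂ hne₂ h₂
  simp only [Set.image_add]
  rw [minkowskiDefect_of_nonempty _ _ ((hne₁.image _).add (hne₂.image _)), ← add_assoc,
    hadd₂ (hK.add (hL₁.image _)) (hne.add (hne₁.image _)), hadd₂ (hL₁.image _) (hne₁.image _),
    (hadd _ htop).add_image hK hne hL₁ hne₁ h₁]
  ring

lemma minkowskiDefect_smul_two [FiniteDimensional ℝ W] [Nontrivial W] (hf : IsConvexValuation f)
    (ht : IsTranslationInvariant f) {K L : Set V} (hK : IsCompactConvex K) (hne : K.Nonempty)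
    (hL : IsCompactConvex L) (hLW : L ⊆ W) :
    minkowskiDefect f K ((2 : ℝ) • L) = 2 * minkowskiDefect f K L := by
  obtain ⟨M, hM, rfl⟩ := hL.exists_image_subtype hLW
  rw [← image_smul_set]
  exact (hf.isSimpleValuation_minkowskiDefect hadd ht hK hne).smul_two
    ((ht.minkowskiDefect hK).comp_image _)
    (vanishesOnOrthogonalSums_minkowskiDefect hadd hf.empty hK hne) hM

lemma minkowskiDefect_smul_two_left [FiniteDimensional ℝ W] [Nontrivial W]
    (hf : IsConvexValuation f) (ht : IsTranslationInvariant f)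
    (htwo : ∀ ⦃M : Set V⦄, IsCompactConvex M → f ((2 : ℝ) • M) = 2 * f M) {K L : Set V}
    (hK : IsCompactConvex K) (hne : K.Nonempty) (hL : IsCompactConvex L) (hne' : L.Nonempty)
    (hLW : L ⊆ W) : minkowskiDefect f ((2 : ℝ) • K) L = minkowskiDefect f K L := by
  have hright := minkowskiDefect_smul_two hadd hf ht (hK.smul 2) hne.smul_set hL hLW
  rw [minkowskiDefect_smul_smul htwo hK hL hne'] at hright
  exact (mul_left_cancel₀ two_ne_zero hright).symm

/- The defect `D(K, L)` is homogeneous of degree one in `L` and in `(K, L)`, so it does not change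
when `K` is halved repeatedly, until only a point is left of `K`. -/
lemma isAdditiveAlong_of_smul_two [FiniteDimensional ℝ W] [Nontrivial W]
    (hf : IsConvexValuation f) (ht : IsTranslationInvariant f)
    (htwo : ∀ ⦃M : Set V⦄, IsCompactConvex M → f ((2 : ℝ) • M) = 2 * f M) :
    IsAdditiveAlong f W := by
  rintro K L hK ⟨k, hk⟩ hL hne' hLW
  have hK' : IsCompactConvex (-k +ᵥ K) := hK.vadd _
  have h0 : (0 : V) ∈ -k +ᵥ K := ⟨k, hk, neg_add_cancel k⟩
  have hconst : ∀ n : ℕ, minkowskiDefect f L ((2⁻¹ : ℝ) ^ n • (-k +ᵥ K)) =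
      minkowskiDefect f L K := by
    intro n
    induction n with
    | zero => rw [pow_zero, one_smul, ht.minkowskiDefect hL hK]
    | succ n ih =>
      have hcK := hK'.smul ((2⁻¹ : ℝ) ^ (n + 1))
      have hne : ((2⁻¹ : ℝ) ^ (n + 1) • (-k +ᵥ K)).Nonempty := ⟨_, 0, h0, rfl⟩
      rw [← ih, minkowskiDefect_comm f hne' hne,
        ← minkowskiDefect_smul_two_left hadd hf ht htwo hcK hne hL hne' hLW,
        minkowskiDefect_comm f hne.smul_set hne', smul_smul, pow_succ',
        mul_inv_cancel_left₀ two_ne_zero]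
  have hlim := (hf.minkowskiDefect hL).tendsto_smul hK' h0 le_rfl
    (pow_right_anti₀ (by norm_num) (by norm_num : (2⁻¹ : ℝ) ≤ 1))
    (tendsto_pow_atTop_nhds_zero_of_lt_one (by norm_num) (by norm_num : (2⁻¹ : ℝ) < 1))
  simp only [hconst] at hlim
  rw [Set.zero_smul_set ⟨0, h0⟩, ← Set.singleton_zero] at hlim
  have hdefect := tendsto_nhds_unique tendsto_const_nhds hlim
  rw [minkowskiDefect_of_nonempty _ _ ⟨k, hk⟩,
    minkowskiDefect_of_nonempty _ _ (Set.singleton_nonempty 0), Set.singleton_zero, add_zero,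
    ← Set.singleton_zero, apply_singleton_zero_of_smul_two htwo, add_comm L K] at hdefect
  linarith

end Step

lemma IsConvexValuation.isAdditiveAlong [FiniteDimensional ℝ V] (hf : IsConvexValuation f)
    (ht : IsTranslationInvariant f)
    (htwo : ∀ ⦃M : Set V⦄, IsCompactConvex M → f ((2 : ℝ) • M) = 2 * f M) (W : Submodule ℝ V) :
    IsAdditiveAlong f W := by
  induction W using WellFoundedLT.induction with
  | ind W ih =>
  rcases subsingleton_or_nontrivial W with hW | hW
  · intro K L _ _ _ hne' hLW
    have hL : L = {0} := hne'.subset_singleton_iff.1 fun x hx =>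
      congrArg Subtype.val (Subsingleton.elim (⟨x, hLW hx⟩ : W) 0)
    rw [hL, apply_singleton_zero_of_smul_two htwo, Set.singleton_zero, add_zero, add_zero]
  · have hlt : ∀ U : Submodule ℝ W, U ≠ ⊤ → U.map W.subtype < W := fun U hU =>
      (Submodule.map_strictMono_of_injective W.injective_subtype (lt_top_iff_ne_top.2 hU)).trans_eq
        W.map_subtype_top
    exact isAdditiveAlong_of_smul_two (fun U hU => ih _ (hlt U hU)) hf ht htwo

theorem IsConvexValuation.isMinkowskiAdditive [FiniteDimensional ℝ V] (hf : IsConvexValuation f)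
    (ht : IsTranslationInvariant f)
    (htwo : ∀ ⦃M : Set V⦄, IsCompactConvex M → f ((2 : ℝ) • M) = 2 * f M) :
    IsMinkowskiAdditive f := fun _ _ hK hne hL hne' =>
  hf.isAdditiveAlong ht htwo ⊤ hK hne hL hne' (Set.subset_univ _)

end MinkowskiAdditivity

section MinkowskiLinearity

section NormedSpace

variable {V : Type*} [NormedAddCommGroup V] [NormedSpace ℝ V] {f : Set V → ℝ} {K : Set V}

lemma IsCompactConvex.sum {ι : Type*} {M : ι → Set V} (s : Finset ι)
    (hM : ∀ i, IsCompactConvex (M i)) : IsCompactConvex (∑ i ∈ s, M i) :=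
  Finset.sum_induction _ IsCompactConvex (fun _ _ => IsCompactConvex.add)
    (Set.singleton_zero (α := V) ▸ IsCompactConvex.singleton 0) fun i _ => hM i

namespace IsMinkowskiAdditive

lemma apply_zero (hadd : IsMinkowskiAdditive f) : f 0 = 0 := by
  have h := hadd (.singleton 0) (Set.singleton_nonempty 0) (.singleton 0) (Set.singleton_nonempty 0)
  rw [Set.singleton_zero, add_zero] at h
  linarith

lemma apply_sum (hadd : IsMinkowskiAdditive f) {ι : Type*} {M : ι → Set V} (s : Finset ι)
    (hM : ∀ i, IsCompactConvex (M i)) (hne : ∀ i, (M i).Nonempty) :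
    f (∑ i ∈ s, M i) = ∑ i ∈ s, f (M i) := by
  classical
  have hsum : ∀ t : Finset ι, (∑ i ∈ t, M i).Nonempty := fun t =>
    Finset.sum_induction _ Set.Nonempty (fun _ _ => Set.Nonempty.add) Set.zero_nonempty
      fun i _ => hne i
  induction s using Finset.induction_on with
  | empty => exact hadd.apply_zero
  | insert a s ha ih =>
    rw [Finset.sum_insert ha, Finset.sum_insert ha, hadd (hM a) (hne a) (.sum s hM) (hsum s), ih]

lemma apply_natCast_smul (hadd : IsMinkowskiAdditive f) (hK : IsCompactConvex K)
    (hne : K.Nonempty) (n : ℕ) : f ((n : ℝ) • K) = n * f K := by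
  induction n with
  | zero => rw [Nat.cast_zero, Set.zero_smul_set hne, hadd.apply_zero, zero_mul]
  | succ n ih =>
    rw [Nat.cast_succ, hK.convex.add_smul n.cast_nonneg zero_le_one, one_smul,
      hadd (hK.smul _) hne.smul_set hK hne, ih, add_one_mul]

lemma apply_nnratCast_smul (hadd : IsMinkowskiAdditive f) (hK : IsCompactConvex K)
    (hne : K.Nonempty) (q : ℚ≥0) : f ((q : ℝ) • K) = q * f K := by
  have hden : (q.den : ℝ) ≠ 0 := Nat.cast_ne_zero.2 q.den_ne_zero
  have h := hadd.apply_natCast_smul (hK.smul q) hne.smul_set q.den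
  rw [smul_smul, NNRat.cast_def, mul_div_cancel₀ _ hden, hadd.apply_natCast_smul hK hne] at h
  rw [NNRat.cast_def, div_mul_eq_mul_div, h, mul_div_cancel_left₀ _ hden]

lemma apply_smul (hadd : IsMinkowskiAdditive f) (hf : IsConvexValuation f)
    (hK : IsCompactConvex K) (h0 : (0 : V) ∈ K) {c : ℝ} (hc : 0 ≤ c) : f (c • K) = c * f K := by
  obtain ⟨q, hanti, hlt, hlim⟩ := Real.exists_seq_rat_strictAnti_tendsto c
  have hrat : ∀ n, f ((q n : ℝ) • K) = q n * f K := fun n => by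
    lift q n to ℚ≥0 using Rat.cast_nonneg.1 (hc.trans (hlt n).le) with p
    exact_mod_cast hadd.apply_nnratCast_smul hK ⟨0, h0⟩ p
  have hleft := hf.tendsto_smul hK h0 hc (fun m n h => Rat.cast_le.2 (hanti.antitone h)) hlim
  simp only [hrat] at hleft
  exact tendsto_nhds_unique hleft (hlim.mul_const _)

end IsMinkowskiAdditive

end NormedSpace

end MinkowskiLinearity

section Averaging

variable {V : Type*} [NormedAddCommGroup V] [InnerProductSpace ℝ V]

lemma norm_le_of_forall_unit_inner_le [Nontrivial V] {x : V} {c : ℝ}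
    (h : ∀ u : V, ‖u‖ = 1 → ⟪u, x⟫_ℝ ≤ c) : ‖x‖ ≤ c := by
  rcases eq_or_ne x 0 with rfl | hx
  · obtain ⟨u, hu⟩ := exists_norm_eq V zero_le_one
    simpa only [inner_zero_right, norm_zero] using h u hu
  · have hx' : ‖x‖ ≠ 0 := norm_ne_zero_iff.2 hx
    have := h ((‖x‖)⁻¹ • x) (norm_smul_inv_norm (𝕜 := ℝ) hx)
    rwa [real_inner_smul_left, real_inner_self_eq_norm_mul_norm, inv_mul_cancel_left₀ hx'] at this

lemma IsCompactConvex.exists_unit_forall_inner_le [CompleteSpace V] {M : Set V}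
    (hM : IsCompactConvex M) (hne : M.Nonempty) {s : ℝ} (hs : ¬ Metric.closedBall 0 s ⊆ M) :
    ∃ u : V, ‖u‖ = 1 ∧ ∀ x ∈ M, ⟪u, x⟫_ℝ ≤ s := by
  obtain ⟨p, hp, hpM⟩ := Set.not_subset.1 hs
  obtain ⟨φ, c, hlt, hc⟩ := geometric_hahn_banach_closed_point hM.convex hM.isClosed hpM
  obtain ⟨u, rfl⟩ := (InnerProductSpace.toDual ℝ V).surjective φ
  simp only [InnerProductSpace.toDual_apply_apply] at hlt hc
  have hu : u ≠ 0 := by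
    rintro rfl
    obtain ⟨m, hm⟩ := hne
    have := hlt m hm
    rw [inner_zero_left] at this hc
    exact lt_asymm this hc
  refine ⟨(‖u‖)⁻¹ • u, norm_smul_inv_norm (𝕜 := ℝ) hu, fun x hx => ?_⟩
  rw [real_inner_smul_left, inv_mul_le_iff₀ (norm_pos_iff.2 hu)]
  calc ⟪u, x⟫_ℝ ≤ ⟪u, p⟫_ℝ := ((hlt x hx).trans hc).le
    _ ≤ ‖u‖ * ‖p‖ := real_inner_le_norm u p
    _ ≤ ‖u‖ * s := by gcongr; exact mem_closedBall_zero_iff.1 hp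

/-- A finite set of unit vectors that meets the `η`-neighbourhood of every unit vector. -/
structure IsSphereNet (η : ℝ) (s : Finset V) : Prop where
  norm_eq_one : ∀ p ∈ s, ‖p‖ = 1
  exists_norm_sub_lt : ∀ u : V, ‖u‖ = 1 → ∃ p ∈ s, ‖u - p‖ < η

lemma exists_isSphereNet [FiniteDimensional ℝ V] {η : ℝ} (hη : 0 < η) :
    ∃ s : Finset V, IsSphereNet η s := by
  obtain ⟨t, ht, hfin, hcov⟩ := finite_cover_balls_of_compact (isCompact_sphere (0 : V) 1) hη
  obtain ⟨s, rfl⟩ := hfin.exists_finset_coe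
  refine ⟨s, fun p hp => mem_sphere_zero_iff_norm.1 (ht hp), fun u hu => ?_⟩
  simpa only [Set.mem_iUnion, Metric.mem_ball, dist_eq_norm, exists_prop, Finset.mem_coe] using
    hcov (mem_sphere_zero_iff_norm.2 hu)

lemma IsSphereNet.nonempty [Nontrivial V] {η : ℝ} {s : Finset V} (hs : IsSphereNet η s) :
    s.Nonempty := by
  obtain ⟨u, hu⟩ := exists_norm_eq V zero_le_one
  obtain ⟨p, hp, -⟩ := hs.exists_norm_sub_lt u hu
  exact ⟨p, hp⟩

/-- Invariance under reflections in linear hyperplanes, on compact convex sets. -/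
def IsReflectionInvariant (f : Set V → ℝ) : Prop :=
  ∀ ⦃K : Set V⦄, IsCompactConvex K → ∀ u : V, f ((ℝ ∙ u)ᗮ.reflection '' K) = f K

/-- The Minkowski average of the reflections of `M` that send `u` to the points of `s`. -/
def reflectionAverage (s : Finset V) (u : V) (M : Set V) : Set V :=
  (s.card : ℝ)⁻¹ • ∑ p ∈ s, (ℝ ∙ (u - p))ᗮ.reflection '' M

variable {s : Finset V} {u : V} {M : Set V}

lemma IsCompactConvex.reflection (hM : IsCompactConvex M) (u : V) :
    IsCompactConvex ((ℝ ∙ u)ᗮ.reflection '' M) :=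
  hM.image ((ℝ ∙ u)ᗮ.reflection.toContinuousLinearEquiv : V →L[ℝ] V)

lemma IsCompactConvex.reflectionAverage (hM : IsCompactConvex M) (s : Finset V) (u : V) :
    IsCompactConvex (reflectionAverage s u M) :=
  (IsCompactConvex.sum s fun p => hM.reflection (u - p)).smul _

lemma mem_reflectionAverage_iff (hs : s.Nonempty) {x : V} :
    x ∈ reflectionAverage s u M ↔ ∃ g : V → V,
      (∀ p ∈ s, g p ∈ M) ∧ ∑ p ∈ s, (ℝ ∙ (u - p))ᗮ.reflection (g p) = (s.card : ℝ) • x := by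
  have hcard : (s.card : ℝ)⁻¹ ≠ 0 := inv_ne_zero (Nat.cast_ne_zero.2 hs.card_ne_zero)
  rw [reflectionAverage, Set.mem_smul_set_iff_inv_smul_mem₀ hcard, inv_inv, Set.mem_finsetSum]
  constructor
  · rintro ⟨g, hg, hsum⟩
    refine ⟨fun p => (ℝ ∙ (u - p))ᗮ.reflection (g p), fun p hp => ?_, ?_⟩
    · obtain ⟨m, hm, hgp⟩ := hg hp
      simpa only [← hgp, Submodule.reflection_reflection] using hm
    · simpa only [Submodule.reflection_reflection] using hsum
  · rintro ⟨g, hg, hsum⟩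
    exact ⟨_, fun {p} hp => Set.mem_image_of_mem _ (hg p hp), hsum⟩

lemma closedBall_subset_reflectionAverage (hs : s.Nonempty) {ρ : ℝ}
    (hM : Metric.closedBall 0 ρ ⊆ M) : Metric.closedBall 0 ρ ⊆ reflectionAverage s u M := by
  intro x hx
  refine (mem_reflectionAverage_iff hs).2 ⟨fun p => (ℝ ∙ (u - p))ᗮ.reflection x,
    fun p _ => hM ?_, ?_⟩
  · rwa [mem_closedBall_zero_iff, LinearIsometryEquiv.norm_map, ← mem_closedBall_zero_iff]
  · simp only [Submodule.reflection_reflection, Finset.sum_const, Nat.cast_smul_eq_nsmul]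

lemma apply_reflectionAverage {f : Set V → ℝ} (hf : IsConvexValuation f)
    (hadd : IsMinkowskiAdditive f) (href : IsReflectionInvariant f) (hM : IsCompactConvex M)
    (h0 : (0 : V) ∈ M) (hs : s.Nonempty) : f (reflectionAverage s u M) = f M := by
  have hcard : (s.card : ℝ) ≠ 0 := Nat.cast_ne_zero.2 hs.card_ne_zero
  have hzero : ∀ p, (0 : V) ∈ (ℝ ∙ (u - p))ᗮ.reflection '' M := fun p => ⟨0, h0, map_zero _⟩
  have hsum : (0 : V) ∈ ∑ p ∈ s, (ℝ ∙ (u - p))ᗮ.reflection '' M :=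
    (Set.mem_finsetSum ..).2 ⟨0, fun _ => hzero _, Finset.sum_const_zero⟩
  rw [reflectionAverage, hadd.apply_smul hf (.sum s fun p => hM.reflection _) hsum (by positivity),
    hadd.apply_sum s (fun p => hM.reflection _) fun p => ⟨0, hzero p⟩]
  simp only [href hM, Finset.sum_const, nsmul_eq_mul, inv_mul_cancel_left₀ hcard]

/- If `M` is short in the direction `u`, then its reflection sending `u` to `p` is short in all
directions close to `p`; the directions close to some `p ∈ s` are all directions. -/
lemma reflectionAverage_subset_closedBall [Nontrivial V] {η R t : ℝ} (hs : IsSphereNet η s)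
    (hu : ‖u‖ = 1) (hMR : M ⊆ Metric.closedBall 0 R) (hMt : ∀ x ∈ M, ⟪u, x⟫_ℝ ≤ t) :
    reflectionAverage s u M ⊆ Metric.closedBall 0 (R - (R - t - η * R) / s.card) := by
  classical
  intro x hx
  obtain ⟨g, hg, hsum⟩ := (mem_reflectionAverage_iff hs.nonempty).1 hx
  have hcard : (0 : ℝ) < s.card := Nat.cast_pos.2 hs.nonempty.card_pos
  have hnorm : ∀ p ∈ s, ‖(ℝ ∙ (u - p))ᗮ.reflection (g p)‖ ≤ R := fun p hp => by
    rw [LinearIsometryEquiv.norm_map]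
    exact mem_closedBall_zero_iff.1 (hMR (hg p hp))
  refine mem_closedBall_zero_iff.2 (norm_le_of_forall_unit_inner_le fun v hv => ?_)
  have hle : ∀ p ∈ s, ⟪v, (ℝ ∙ (u - p))ᗮ.reflection (g p)⟫_ℝ ≤ R := fun p hp =>
    (real_inner_le_norm v _).trans (by rw [hv, one_mul]; exact hnorm p hp)
  obtain ⟨p, hp, hvp⟩ := hs.exists_norm_sub_lt v hv
  have hshort : ⟪v, (ℝ ∙ (u - p))ᗮ.reflection (g p)⟫_ℝ ≤ t + η * R := by
    have hpu : (ℝ ∙ (u - p))ᗮ.reflection u = p :=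
      Submodule.reflection_sub (hu.trans (hs.norm_eq_one p hp).symm)
    calc ⟪v, (ℝ ∙ (u - p))ᗮ.reflection (g p)⟫_ℝ
        = ⟪p, (ℝ ∙ (u - p))ᗮ.reflection (g p)⟫_ℝ + ⟪v - p, (ℝ ∙ (u - p))ᗮ.reflection (g p)⟫_ℝ := by
          rw [← inner_add_left, add_sub_cancel]
      _ = ⟪u, g p⟫_ℝ + ⟪v - p, (ℝ ∙ (u - p))ᗮ.reflection (g p)⟫_ℝ := by
          rw [← LinearIsometryEquiv.inner_map_map (ℝ ∙ (u - p))ᗮ.reflection u, hpu]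
      _ ≤ t + η * R := add_le_add (hMt _ (hg p hp)) ((real_inner_le_norm _ _).trans
          (mul_le_mul hvp.le (hnorm p hp) (norm_nonneg _) ((norm_nonneg _).trans hvp.le)))
  have htotal : s.card * ⟪v, x⟫_ℝ ≤ (s.card - 1) * R + (t + η * R) := by
    rw [← real_inner_smul_right, ← hsum, inner_sum, ← Finset.sum_erase_add _ _ hp]
    refine add_le_add ((Finset.sum_le_card_nsmul _ _ R fun i hi =>
      hle i (Finset.mem_of_mem_erase hi)).trans_eq ?_) hshort
    rw [Finset.card_erase_of_mem hp, nsmul_eq_mul, Nat.cast_pred hs.nonempty.card_pos]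
  rw [← le_div_iff₀' hcard] at htotal
  refine htotal.trans_eq ?_
  field_simp
  ring

end Averaging

section Balls

variable {V : Type*} [NormedAddCommGroup V] {f : Set V → ℝ}

section NormedSpace

variable [NormedSpace ℝ V]

lemma IsConvexValuation.tendsto_of_between_closedBalls (hf : IsConvexValuation f) {N : ℕ → Set V}
    (hN : ∀ k, IsCompactConvex (N k)) {r : ℝ} {b c : ℕ → ℝ}
    (hb : ∀ k, Metric.closedBall 0 (b k) ⊆ N k) (hc : ∀ k, N k ⊆ Metric.closedBall 0 (c k))
    (hrb : ∀ k, r ≤ b k) (hcb : ∀ k, c (k + 1) ≤ b k) (hlim : Tendsto c atTop (𝓝 r)) :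
    Tendsto (fun k => f (N k)) atTop (𝓝 (f (Metric.closedBall 0 r))) := by
  have hanti : Antitone N := antitone_nat_of_succ_le fun k =>
    ((hc (k + 1)).trans (Metric.closedBall_subset_closedBall (hcb k))).trans (hb k)
  have hInter : ⋂ k, N k = Metric.closedBall 0 r := by
    refine Set.Subset.antisymm (fun x hx => mem_closedBall_zero_iff.2 ?_) <|
      Set.subset_iInter fun k => (Metric.closedBall_subset_closedBall (hrb k)).trans (hb k)
    exact ge_of_tendsto' hlim fun k => mem_closedBall_zero_iff.1 (hc k (Set.mem_iInter.1 hx k))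
  exact hInter ▸ hf.tendsto_iInter hN hanti

variable [ProperSpace V]

lemma closedBall_add_subset_add_closedBall {M : Set V} (h0 : (0 : V) ∈ M) {a b : ℝ} (hb : 0 ≤ b)
    (hM : Metric.closedBall 0 a ⊆ M) :
    Metric.closedBall 0 (a + b) ⊆ M + Metric.closedBall 0 b := by
  rcases le_total 0 a with ha | ha
  · rw [← add_zero (0 : V), ← closedBall_add_closedBall ha hb, add_zero]
    exact Set.add_subset_add_right hM
  · refine (Metric.closedBall_subset_closedBall (add_le_of_nonpos_left ha)).trans ?_
    exact Set.subset_add_right _ h0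

lemma isCompactConvex_closedBall (r : ℝ) : IsCompactConvex (Metric.closedBall (0 : V) r) :=
  ⟨isCompact_closedBall _ _, convex_closedBall _ _⟩

lemma IsMinkowskiAdditive.apply_closedBall (hadd : IsMinkowskiAdditive f)
    (hf : IsConvexValuation f) {r : ℝ} (hr : 0 ≤ r) :
    f (Metric.closedBall 0 r) = r * f (Metric.closedBall 0 1) := by
  rw [← smul_unitClosedBall_of_nonneg hr, hadd.apply_smul hf (isCompactConvex_closedBall 1)
    (Metric.mem_closedBall_self zero_le_one) hr]

lemma IsMinkowskiAdditive.apply_closedBall_of_between (hadd : IsMinkowskiAdditive f)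
    (hf : IsConvexValuation f) {r c : ℝ} (hr : 0 ≤ r)
    (h : ∀ ε > 0, ∃ M, IsCompactConvex M ∧ (0 : V) ∈ M ∧ f M = c ∧
      Metric.closedBall 0 (r - ε) ⊆ M ∧ M ⊆ Metric.closedBall 0 (r + ε)) :
    f (Metric.closedBall 0 r) = c := by
  let a : ℕ → ℝ := fun k => 2⁻¹ ^ k
  have ha : ∀ k, 0 < a k := fun k => by positivity
  have ha' : ∀ k, a (k + 1) = a k / 2 := fun k => by rw [div_eq_mul_inv]; exact pow_succ _ _
  have hlim : Tendsto a atTop (𝓝 0) :=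
    tendsto_pow_atTop_nhds_zero_of_lt_one (by norm_num) (by norm_num)
  choose M hM h0 hfM hin hout using fun k => h (a k / 4) (by linarith [ha k])
  have hcB := isCompactConvex_closedBall (V := V)
  have hout' : ∀ k, M k + Metric.closedBall 0 (a k) ⊆ Metric.closedBall 0 (r + a k / 4 + a k) :=
    fun k => (Set.add_subset_add_right (hout k)).trans_eq <| by
      rw [closedBall_add_closedBall (by linarith [ha k]) (ha k).le, add_zero]
  have hlim' : Tendsto (fun k => r + a k / 4 + a k) atTop (𝓝 r) := by
    simpa only [zero_div, add_zero] using ((hlim.div_const 4).const_add r).add hlim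
  have hleft := hf.tendsto_of_between_closedBalls (fun k => (hM k).add (hcB (a k)))
    (fun k => closedBall_add_subset_add_closedBall (h0 k) (ha k).le (hin k)) hout'
    (fun k => by linarith [ha k]) (fun k => by linarith [ha k, ha' k]) hlim'
  have hright : ∀ k, f (M k + Metric.closedBall 0 (a k)) = c + a k * f (Metric.closedBall 0 1) :=
    fun k => by
      rw [hadd (hM k) ⟨0, h0 k⟩ (hcB _) (Metric.nonempty_closedBall.2 (ha k).le), hfM,
        hadd.apply_closedBall hf (ha k).le]
  simp only [hright] at hleft
  refine tendsto_nhds_unique hleft ?_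
  simpa only [zero_mul, add_zero] using (hlim.mul_const _).const_add c

end NormedSpace

variable [InnerProductSpace ℝ V] [FiniteDimensional ℝ V] [Nontrivial V]

lemma exists_forall_reflectionAverage_subset {r ε : ℝ} (hr : 0 ≤ r) (hε : 0 < ε) :
    ∃ δ > 0, ∃ s : Finset V, s.Nonempty ∧ ∀ R, r ≤ R → R < r + δ → ∀ M : Set V, IsCompactConvex M →
      M.Nonempty → M ⊆ Metric.closedBall 0 R → ¬ Metric.closedBall 0 (r - ε) ⊆ M →
      ∃ u : V, ∃ R' < r, reflectionAverage s u M ⊆ Metric.closedBall 0 R' := by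
  obtain ⟨s, hs⟩ := exists_isSphereNet (V := V) (η := ε / (2 * (r + 1))) (by positivity)
  have hcard : (0 : ℝ) < s.card := Nat.cast_pos.2 hs.nonempty.card_pos
  refine ⟨min 1 (ε / (2 * s.card)), by positivity, s, hs.nonempty, ?_⟩
  intro R hrR hR M hM hne hMR hball
  obtain ⟨u, hu, hMu⟩ := hM.exists_unit_forall_inner_le hne hball
  refine ⟨u, _, ?_, reflectionAverage_subset_closedBall hs hu hMR hMu⟩
  have hηR : ε / (2 * (r + 1)) * R ≤ ε / 2 :=
    calc ε / (2 * (r + 1)) * R ≤ ε / (2 * (r + 1)) * (r + 1) := by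
          gcongr; exact hR.le.trans (by gcongr; exact min_le_left ..)
      _ = ε / 2 := by field_simp
  have hδ : (R - r) * s.card < ε / 2 :=
    calc (R - r) * s.card < ε / (2 * s.card) * s.card := by
          gcongr; exact (sub_lt_iff_lt_add'.2 hR).trans_le (min_le_right ..)
      _ = ε / 2 := by field_simp
  rw [sub_lt_comm, lt_div_iff₀ hcard]
  linarith

/- `r` is the infimum of the radii of balls that contain averages of reflections of `K`: averaging
once more would shrink the radius further if the set did not nearly fill the ball. -/
lemma exists_forall_between_closedBalls (hf : IsConvexValuation f) (hadd : IsMinkowskiAdditive f)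
    (href : IsReflectionInvariant f) {K : Set V} (hK : IsCompactConvex K) {ρ : ℝ} (hρ : 0 ≤ ρ)
    (hKρ : Metric.closedBall 0 ρ ⊆ K) :
    ∃ r ≥ ρ, ∀ ε > 0, ∃ M, IsCompactConvex M ∧ (0 : V) ∈ M ∧ f M = f K ∧
      Metric.closedBall 0 (r - ε) ⊆ M ∧ M ⊆ Metric.closedBall 0 (r + ε) := by
  let S : Set ℝ := {R | ∃ M, IsCompactConvex M ∧ Metric.closedBall 0 ρ ⊆ M ∧ f M = f K ∧
    M ⊆ Metric.closedBall 0 R}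
  have hS : ρ ∈ lowerBounds S := by
    rintro R ⟨M, -, hρM, -, hMR⟩
    obtain ⟨u, hu⟩ := exists_norm_eq V hρ
    simpa only [mem_closedBall_zero_iff, hu] using hMR (hρM (mem_closedBall_zero_iff.2 hu.le))
  obtain ⟨R₀, hR₀⟩ := hK.isCompact.isBounded.subset_closedBall 0
  have hne : S.Nonempty := ⟨R₀, K, hK, hKρ, rfl, hR₀⟩
  have hρr : ρ ≤ sInf S := le_csInf hne hS
  refine ⟨sInf S, hρr, fun ε hε => ?_⟩
  obtain ⟨δ, hδ, s, hs, hshrink⟩ :=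
    exists_forall_reflectionAverage_subset (V := V) (hρ.trans hρr) hε
  obtain ⟨R, hRS, hR⟩ := exists_lt_of_csInf_lt hne
    (lt_add_of_pos_right (sInf S) (lt_min hδ hε))
  obtain ⟨M, hM, hρM, hfM, hMR⟩ := id hRS
  have h0 : (0 : V) ∈ M := hρM (Metric.mem_closedBall_self hρ)
  refine ⟨M, hM, h0, hfM, ?_, hMR.trans (Metric.closedBall_subset_closedBall
    (hR.le.trans (by gcongr; exact min_le_right ..)))⟩
  by_contra hball
  obtain ⟨u, R', hR', hsub⟩ := hshrink R (csInf_le ⟨ρ, hS⟩ hRS)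
    (hR.trans_le (by gcongr; exact min_le_left ..)) M hM ⟨0, h0⟩ hMR hball
  exact hR'.not_ge <| csInf_le ⟨ρ, hS⟩ ⟨_, hM.reflectionAverage s u,
    closedBall_subset_reflectionAverage hs hρM,
    (apply_reflectionAverage hf hadd href hM h0 hs).trans hfM, hsub⟩

theorem IsMinkowskiAdditive.exists_eq_mul_closedBall (hadd : IsMinkowskiAdditive f)
    (hf : IsConvexValuation f) (href : IsReflectionInvariant f) {K : Set V}
    (hK : IsCompactConvex K) {ρ : ℝ} (hρ : 0 ≤ ρ) (hKρ : Metric.closedBall 0 ρ ⊆ K) :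
    ∃ r ≥ ρ, f K = r * f (Metric.closedBall 0 1) := by
  obtain ⟨r, hr, h⟩ := exists_forall_between_closedBalls hf hadd href hK hρ hKρ
  refine ⟨r, hr, ?_⟩
  rw [← hadd.apply_closedBall_of_between hf (hρ.trans hr) h,
    hadd.apply_closedBall hf (hρ.trans hr)]

end Balls

section Parallelepipeds

variable {E : Type*} [NormedAddCommGroup E] [NormedSpace ℝ E] {ι κ : Type*} [Fintype ι] [Fintype κ]

lemma isCompactConvex_parallelepiped (v : ι → E) :
    IsCompactConvex (parallelepiped v) :=
  ⟨isCompact_Icc.image (by fun_prop), convex_parallelepiped v⟩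

lemma parallelepiped_sumElim (v : ι → E) (w : κ → E) :
    parallelepiped (Sum.elim v w) = parallelepiped v + parallelepiped w := by
  simp only [parallelepiped_eq_sum_segment, Fintype.sum_sum_type, Sum.elim_inl, Sum.elim_inr]

end Parallelepipeds

section CubeVanishing

variable {V : Type*} [NormedAddCommGroup V] [InnerProductSpace ℝ V] {f : Set V → ℝ}

section Slices

variable {W : Submodule ℝ V} {M : Set V}

lemma IsSimpleValuation.comp_image_subtype_add (hf : IsSimpleValuation f) (hM : IsCompactConvex M)
    (hMW : M ⊆ (Wᗮ : Submodule ℝ V)) :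
    IsSimpleValuation fun L : Set W => f (W.subtypeL '' L + M) where
  toIsConvexValuation :=
    hf.toIsConvexValuation.comp_image_add (A := W.subtypeL) W.injective_subtype hM
  eq_zero_of_subset_hyperplane L hL u hu c hLu := by
    refine hf.eq_zero_of_subset_hyperplane ((hL.image _).add hM) (u := (u : V)) (c := c)
      (Submodule.coe_eq_zero.not.2 hu) ?_
    rintro _ ⟨_, ⟨l, hl, rfl⟩, m, hm, rfl⟩
    have hum : ⟪(u : V), m⟫_ℝ = 0 := Submodule.inner_right_of_mem_orthogonal u.2 (hMW hm)
    exact (inner_add_right _ _ _).trans ((congrArg₂ _ (hLu hl) hum).trans (add_zero c))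

lemma IsTranslationInvariant.comp_image_subtype_add (ht : IsTranslationInvariant f)
    (hM : IsCompactConvex M) : IsTranslationInvariant fun L : Set W => f (W.subtypeL '' L + M) :=
  fun L hL w => by simp only [Set.image_vadd_distrib, vadd_add_assoc, ht ((hL.image _).add hM)]

lemma coe_reflection_orthogonal_singleton (u x : W) :
    (((ℝ ∙ u)ᗮ.reflection x : W) : V) = (ℝ ∙ (u : V))ᗮ.reflection (x : V) := by
  simp only [Submodule.reflection_orthogonal_apply, Submodule.reflection_singleton_apply,
    Submodule.coe_inner, Submodule.coe_norm, Submodule.coe_neg, Submodule.coe_sub]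
  rfl

lemma IsReflectionInvariant.comp_image_subtype_add (href : IsReflectionInvariant f)
    (hM : IsCompactConvex M) (hMW : M ⊆ (Wᗮ : Submodule ℝ V)) :
    IsReflectionInvariant fun L : Set W => f (W.subtypeL '' L + M) := by
  intro L hL u
  have himage : W.subtypeL '' ((ℝ ∙ u)ᗮ.reflection '' L) =
      (ℝ ∙ (u : V))ᗮ.reflection '' (W.subtypeL '' L) := by
    rw [Set.image_image, Set.image_image]
    exact Set.image_congr fun x _ => coe_reflection_orthogonal_singleton u x
  have hfix : (ℝ ∙ (u : V))ᗮ.reflection '' M = M := by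
    refine (Set.image_congr fun m hm => ?_).trans (Set.image_id M)
    exact Submodule.reflection_mem_subspace_eq_self
      (Submodule.mem_orthogonal_singleton_iff_inner_right.2
        (Submodule.inner_right_of_mem_orthogonal u.2 (hMW hm)))
  simp only [himage]
  nth_rw 1 [← hfix]
  rw [← Set.image_add, href ((hL.image _).add hM)]

end Slices

lemma orthonormal_sumElim_coe {W : Submodule ℝ V} {ι κ : Type*} {b : ι → W} {c : κ → Wᗮ}
    (hb : Orthonormal ℝ b) (hc : Orthonormal ℝ c) :
    Orthonormal ℝ (Sum.elim (W.subtypeₗᵢ ∘ b) (Wᗮ.subtypeₗᵢ ∘ c)) := by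
  have hb' := hb.comp_linearIsometry W.subtypeₗᵢ
  have hc' := hc.comp_linearIsometry Wᗮ.subtypeₗᵢ
  refine ⟨Sum.rec hb'.1 hc'.1, ?_⟩
  rintro (i | i) (j | j) hij
  · exact hb'.2 (ne_of_apply_ne Sum.inl hij)
  · exact Submodule.inner_right_of_mem_orthogonal (b i).2 (c j).2
  · exact Submodule.inner_left_of_mem_orthogonal (b j).2 (c i).2
  · exact hc'.2 (ne_of_apply_ne Sum.inr hij)

lemma closedBall_half_subset_vadd_parallelepiped {ι : Type*} [Fintype ι]
    (b : OrthonormalBasis ι ℝ V) :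
    Metric.closedBall 0 2⁻¹ ⊆ (-∑ i, (2⁻¹ : ℝ) • b i) +ᵥ parallelepiped b := by
  classical
  intro x hx
  rw [Set.mem_vadd_set_iff_neg_vadd_mem, neg_neg, vadd_eq_add, ← b.coe_toBasis,
    parallelepiped_basis_eq]
  intro i
  have hxi : |⟪b i, x⟫_ℝ| ≤ 2⁻¹ := (abs_real_inner_le_norm _ _).trans <| by
    rw [b.norm_eq_one, one_mul]
    exact mem_closedBall_zero_iff.1 hx
  have hsum : ⟪b i, ∑ j, (2⁻¹ : ℝ) • b j⟫_ℝ = 2⁻¹ := by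
    simp only [inner_sum, real_inner_smul_right, b.inner_eq_ite, mul_ite, mul_one, mul_zero,
      Finset.sum_ite_eq, Finset.mem_univ, if_true]
  rw [b.coe_toBasis_repr_apply, b.repr_apply_apply, inner_add_right, b.coe_toBasis, hsum]
  constructor <;> linarith [abs_le.1 hxi]

variable [FiniteDimensional ℝ V]

/-- Vanishing on the unit cubes, the parallelepipeds spanned by orthonormal bases. -/
def VanishesOnCubes (f : Set V → ℝ) : Prop :=
  ∀ b : OrthonormalBasis (Fin (Module.finrank ℝ V)) ℝ V, f (parallelepiped b) = 0

lemma VanishesOnCubes.of_orthonormal (hq : VanishesOnCubes f) {ι : Type*} [Fintype ι] {v : ι → V}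
    (hv : Orthonormal ℝ v) (hcard : Fintype.card ι = Module.finrank ℝ V) :
    f (parallelepiped v) = 0 := by
  have hspan := hv.linearIndependent.span_eq_top_of_card_eq_finrank' hcard
  have h := hq ((OrthonormalBasis.mk hv hspan.ge).reindex (Fintype.equivFinOfCardEq hcard))
  rwa [OrthonormalBasis.coe_reindex, parallelepiped_comp_equiv, OrthonormalBasis.coe_mk] at h

lemma VanishesOnCubes.apply_image_add_image (hq : VanishesOnCubes f) {W : Submodule ℝ V}
    (b : OrthonormalBasis (Fin (Module.finrank ℝ W)) ℝ W)
    (c : OrthonormalBasis (Fin (Module.finrank ℝ Wᗮ)) ℝ Wᗮ) :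
    f (W.subtypeL '' parallelepiped b + Wᗮ.subtypeL '' parallelepiped c) = 0 := by
  have h := hq.of_orthonormal (orthonormal_sumElim_coe b.orthonormal c.orthonormal)
    (by rw [Fintype.card_sum, Fintype.card_fin, Fintype.card_fin, W.finrank_add_finrank_orthogonal])
  rw [parallelepiped_sumElim] at h
  convert h using 3
  · exact image_parallelepiped W.subtype b
  · exact image_parallelepiped Wᗮ.subtype c

/-- The uniqueness statement that is proved by induction on the dimension of `V`. -/
def CubesDetermineSimpleValuations (V : Type*) [NormedAddCommGroup V] [InnerProductSpace ℝ V]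
    [FiniteDimensional ℝ V] : Prop :=
  ∀ ⦃f : Set V → ℝ⦄, IsSimpleValuation f → IsTranslationInvariant f → IsReflectionInvariant f →
    VanishesOnCubes f → ∀ ⦃K : Set V⦄, IsCompactConvex K → f K = 0

lemma CubesDetermineSimpleValuations.apply_add_eq_zero {W : Submodule ℝ V}
    (hW : CubesDetermineSimpleValuations W) (hf : IsSimpleValuation f)
    (ht : IsTranslationInvariant f) (href : IsReflectionInvariant f) {L M : Set V}
    (hL : IsCompactConvex L) (hLW : L ⊆ W) (hM : IsCompactConvex M)
    (hMW : M ⊆ (Wᗮ : Submodule ℝ V))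
    (hq : VanishesOnCubes fun L : Set W => f (W.subtypeL '' L + M)) : f (L + M) = 0 := by
  obtain ⟨L, hL', rfl⟩ := hL.exists_image_subtype hLW
  exact hW (hf.comp_image_subtype_add hM hMW) (ht.comp_image_subtype_add hM)
    (href.comp_image_subtype_add hM hMW) hq hL'

lemma vanishesOnOrthogonalSums_of_vanishesOnCubes
    (hdet : ∀ W : Submodule ℝ V, W ≠ ⊤ → CubesDetermineSimpleValuations W)
    (hf : IsSimpleValuation f) (ht : IsTranslationInvariant f) (href : IsReflectionInvariant f)
    (hq : VanishesOnCubes f) : VanishesOnOrthogonalSums f := by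
  intro W hbot htop L₁ L₂ hL₁ hL₂ h₁ h₂
  have hbot' : Wᗮ ≠ ⊤ := fun h => hbot ((Submodule.orthogonal_eq_top_iff W).1 h)
  refine (hdet W htop).apply_add_eq_zero hf ht href hL₁ h₁ hL₂ h₂ fun b => ?_
  have hb := (isCompactConvex_parallelepiped b).image W.subtypeL
  have hbW : W.subtypeL '' parallelepiped b ⊆ (Wᗮᗮ : Submodule ℝ V) := by
    rintro _ ⟨x, -, rfl⟩
    exact W.le_orthogonal_orthogonal x.2
  refine (congrArg f (add_comm _ _)).trans ?_
  refine (hdet Wᗮ hbot').apply_add_eq_zero hf ht href hL₂ h₂ hb hbW fun c => ?_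
  exact (congrArg f (add_comm _ _)).trans (hq.apply_image_add_image b c)

lemma IsMinkowskiAdditive.eq_zero_of_vanishesOnCubes [Nontrivial V] (hadd : IsMinkowskiAdditive f)
    (hf : IsConvexValuation f) (ht : IsTranslationInvariant f) (href : IsReflectionInvariant f)
    (hq : VanishesOnCubes f) {K : Set V} (hK : IsCompactConvex K) : f K = 0 := by
  rcases K.eq_empty_or_nonempty with rfl | ⟨k, hk⟩
  · exact hf.empty
  have hball : f (Metric.closedBall 0 1) = 0 := by
    let b := stdOrthonormalBasis ℝ V
    have hcube := isCompactConvex_parallelepiped b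
    obtain ⟨r, hr, hfr⟩ := hadd.exists_eq_mul_closedBall hf href (hcube.vadd _) (by positivity)
      (closedBall_half_subset_vadd_parallelepiped b)
    rw [ht hcube, hq b, eq_comm, mul_eq_zero] at hfr
    exact hfr.resolve_left (lt_of_lt_of_le (by positivity) hr).ne'
  have h0 : Metric.closedBall (0 : V) 0 ⊆ -k +ᵥ K := by
    rw [Metric.closedBall_zero, Set.singleton_subset_iff]
    exact ⟨k, hk, neg_add_cancel k⟩
  obtain ⟨r, -, hfr⟩ := hadd.exists_eq_mul_closedBall hf href (hK.vadd _) le_rfl h0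
  rwa [ht hK, hball, mul_zero] at hfr

lemma cubesDetermineSimpleValuations_of_subsingleton [Subsingleton V] :
    CubesDetermineSimpleValuations V := by
  intro f hf _ _ hq K _
  rcases K.eq_empty_or_nonempty with rfl | hne
  · exact hf.empty
  let b := stdOrthonormalBasis ℝ V
  have hcube : (parallelepiped b).Nonempty := ⟨_, Set.mem_image_of_mem _ ⟨le_rfl, zero_le_one⟩⟩
  rw [Subsingleton.eq_univ_of_nonempty hne, ← Subsingleton.eq_univ_of_nonempty hcube, hq b]

theorem cubesDetermineSimpleValuations (V : Type*) [NormedAddCommGroup V] [InnerProductSpace ℝ V]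
    [FiniteDimensional ℝ V] : CubesDetermineSimpleValuations V := by
  induction hn : Module.finrank ℝ V using Nat.strong_induction_on generalizing V with
  | _ n ih =>
  rcases subsingleton_or_nontrivial V with hV | hV
  · exact cubesDetermineSimpleValuations_of_subsingleton
  intro f hf ht href hq K hK
  have hdet : ∀ W : Submodule ℝ V, W ≠ ⊤ → CubesDetermineSimpleValuations W := fun W hW =>
    ih _ (hn ▸ Submodule.finrank_lt hW) W rfl
  have ho := vanishesOnOrthogonalSums_of_vanishesOnCubes hdet hf ht href hq
  have hadd := hf.toIsConvexValuation.isMinkowskiAdditive ht fun _ hM => hf.smul_two ht ho hM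
  exact hadd.eq_zero_of_vanishesOnCubes hf.toIsConvexValuation ht href hq hK

end CubeVanishing

section VolumeCharacterization

variable {V : Type*} [NormedAddCommGroup V] [InnerProductSpace ℝ V] {f : Set V → ℝ}

/-- Invariance under rigid motions, on compact convex sets. -/
def IsIsometryInvariant (f : Set V → ℝ) : Prop :=
  ∀ ⦃K : Set V⦄, IsCompactConvex K → ∀ T : V ≃ᵢ V, f (T '' K) = f K

namespace IsIsometryInvariant

lemma isTranslationInvariant (hf : IsIsometryInvariant f) : IsTranslationInvariant f :=
  fun _ hK v => hf hK (IsometryEquiv.constVAdd v)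

lemma isReflectionInvariant (hf : IsIsometryInvariant f) : IsReflectionInvariant f :=
  fun _ hK u => hf hK (ℝ ∙ u)ᗮ.reflection.toIsometryEquiv

lemma add_const_mul {g : Set V → ℝ} (hf : IsIsometryInvariant f) (hg : IsIsometryInvariant g)
    (c : ℝ) : IsIsometryInvariant fun K => f K + c * g K :=
  fun K hK T => by simp only [hf hK T, hg hK T]

lemma parallelepiped_eq (hf : IsIsometryInvariant f) {ι : Type*} [Fintype ι]
    (b c : OrthonormalBasis ι ℝ V) : f (parallelepiped b) = f (parallelepiped c) := by
  let T : V ≃ₗᵢ[ℝ] V := c.equiv b (Equiv.refl ι)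
  have hT : T '' parallelepiped c = parallelepiped b := by
    refine (image_parallelepiped (T : V →ₗ[ℝ] V) c).trans (congrArg parallelepiped ?_)
    exact funext fun i => c.equiv_apply_basis b (Equiv.refl ι) i
  rw [← hT]
  exact hf (isCompactConvex_parallelepiped c) T.toIsometryEquiv

end IsIsometryInvariant

variable [FiniteDimensional ℝ V] [MeasurableSpace V] [BorelSpace V]

lemma addHaar_inner_eq (ν : Measure V) [ν.IsAddHaarMeasure] {u : V} (hu : u ≠ 0) (c : ℝ) :
    ν {x | ⟪u, x⟫_ℝ = c} = 0 := by
  rcases Set.eq_empty_or_nonempty {x | ⟪u, x⟫_ℝ = c} with h | ⟨p, hp⟩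
  · rw [h, measure_empty]
  have hsub : {x | ⟪u, x⟫_ℝ = c} ⊆ AffineSubspace.mk' p (ℝ ∙ u)ᗮ := fun x hx => by
    rw [SetLike.mem_coe, AffineSubspace.mem_mk', Submodule.mem_orthogonal_singleton_iff_inner_right,
      vsub_eq_sub, inner_sub_right, Set.mem_ofPred.1 hx, Set.mem_ofPred.1 hp, sub_self]
  refine measure_mono_null hsub (Measure.addHaar_affineSubspace ν _ fun htop => hu ?_)
  have hdir : (ℝ ∙ u)ᗮ = ⊤ := by
    rw [← AffineSubspace.direction_mk' p (ℝ ∙ u)ᗮ, htop, AffineSubspace.direction_top]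
  exact Submodule.span_singleton_eq_bot.1 ((Submodule.orthogonal_eq_top_iff _).1 hdir)

lemma isSimpleValuation_measureReal (ν : Measure V) [ν.IsAddHaarMeasure] :
    IsSimpleValuation ν.real where
  empty := measureReal_empty
  union_add_inter K L hK hL _ :=
    measureReal_union_add_inter hL.isClosed.measurableSet hK.isCompact.measure_ne_top
      hL.isCompact.measure_ne_top
  tendsto_iInter K hK hanti := by
    have hI : ν (⋂ i, K i) ≠ ⊤ :=
      measure_ne_top_of_subset (Set.iInter_subset K 0) (hK 0).isCompact.measure_ne_top
    exact (ENNReal.tendsto_toReal hI).comp <| tendsto_measure_iInter_atTop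
      (fun i => (hK i).isClosed.measurableSet.nullMeasurableSet) hanti
      ⟨0, (hK 0).isCompact.measure_ne_top⟩
  eq_zero_of_subset_hyperplane K _ u hu c hKu := by
    rw [measureReal_def, measure_mono_null hKu (addHaar_inner_eq ν hu c), ENNReal.toReal_zero]

lemma isIsometryInvariant_volumeReal : IsIsometryInvariant (volume : Measure V).real :=
  fun K _ T => by
    rw [measureReal_def, ← InnerProductSpace.euclideanHausdorffMeasure_eq_volume,
      T.isometry.euclideanHausdorffMeasure_image, ← measureReal_def]

theorem IsSimpleValuation.eq_mul_volumeReal (hf : IsSimpleValuation f)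
    (hinv : IsIsometryInvariant f) (b : OrthonormalBasis (Fin (Module.finrank ℝ V)) ℝ V)
    {K : Set V} (hK : IsCompactConvex K) :
    f K = f (parallelepiped b) * volume.real K := by
  set c := f (parallelepiped b)
  have hginv := hinv.add_const_mul isIsometryInvariant_volumeReal (-c)
  have hcubes : VanishesOnCubes fun L => f L + -c * volume.real L := fun b' => by
    simp only [measureReal_def, b'.volume_parallelepiped, ENNReal.toReal_one,
      hinv.parallelepiped_eq b' b, c, mul_one, add_neg_cancel]
  have h := cubesDetermineSimpleValuations V
    (hf.add_const_mul (isSimpleValuation_measureReal volume) (-c))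
    hginv.isTranslationInvariant hginv.isReflectionInvariant hcubes hK
  linarith

end VolumeCharacterization

lemma continuous_of_tendsto_comp_monotone_or_antitone {α β : Type*} [LinearOrder α]
    [TopologicalSpace α] [FirstCountableTopology α] [TopologicalSpace β] {φ : α → β}
    (h : ∀ ⦃t : ℕ → α⦄ ⦃a : α⦄, Monotone t ∨ Antitone t → Tendsto t atTop (𝓝 a) →
      Tendsto (φ ∘ t) atTop (𝓝 (φ a))) : Continuous φ := by
  refine continuous_iff_continuousAt.2 fun a => tendsto_of_subseq_tendsto fun t ht => ?_
  obtain ⟨g, hg⟩ := exists_increasing_or_nonincreasing_subseq (· ≤ ·) t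
  refine ⟨g, h (t := t ∘ g) (hg.imp (fun hg => ?_) fun hg => ?_)
    (ht.comp g.strictMono.tendsto_atTop)⟩
  · exact monotone_nat_of_le_succ fun n => hg n (n + 1) n.lt_succ_self
  · exact antitone_nat_of_succ_le fun n => (not_le.1 (hg n (n + 1) n.lt_succ_self)).le

section Indicators

variable {N : ℕ} {K : Set (EuclideanSpace ℝ (Fin N))} {μ : (EuclideanSpace ℝ (Fin N) → ℝ) → ℝ}
  {t : ℝ}

lemma IsCompactConvex.quasiConcave_indicator (hK : IsCompactConvex K) (ht : 0 ≤ t) :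
    QuasiConcave (K.indicator fun _ => t) := by
  refine ⟨fun x => Set.indicator_nonneg (fun _ _ => ht) x, fun s hs => ?_⟩
  rcases le_or_gt s t with hst | hst
  · have hlevel : {x | s ≤ K.indicator (fun _ => t) x} = K := by
      ext x
      by_cases hx : x ∈ K <;> simp [hx, hst, hs]
    rw [hlevel]
    exact Or.inr ⟨hK.isCompact, hK.convex⟩
  · refine Or.inl (Set.eq_empty_of_forall_notMem fun x hx => hst.not_ge (le_trans hx ?_))
    exact Set.indicator_apply_le' (fun _ => le_rfl) fun _ => ht

lemma isConvexValuation_indicator (hval : IsValuation μ) (hcont : IsContinuousVal μ) (ht : 0 ≤ t) :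
    IsConvexValuation fun K : Set (EuclideanSpace ℝ (Fin N)) => μ (K.indicator fun _ => t) where
  empty := by
    simp only [Set.indicator_empty]
    exact hval.1
  union_add_inter K L hK hL hKL := by
    have hmax : (fun x => max (K.indicator (fun _ => t) x) (L.indicator (fun _ => t) x)) =
        (K ∪ L).indicator fun _ => t := by
      ext x
      by_cases hxK : x ∈ K <;> by_cases hxL : x ∈ L <;> simp [hxK, hxL, ht]
    have hmin : (fun x => min (K.indicator (fun _ => t) x) (L.indicator (fun _ => t) x)) =
        (K ∩ L).indicator fun _ => t := by
      ext x
      by_cases hxK : x ∈ K <;> by_cases hxL : x ∈ L <;> simp [hxK, hxL, ht]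
    have hunion : IsCompactConvex (K ∪ L) := ⟨hK.isCompact.union hL.isCompact, hKL⟩
    have h := hval.2 _ _ (hK.quasiConcave_indicator ht) (hL.quasiConcave_indicator ht)
      (hmax ▸ hunion.quasiConcave_indicator ht)
    rwa [hmax, hmin] at h
  tendsto_iInter K hK hanti := by
    have hI : IsCompactConvex (⋂ i, K i) :=
      ⟨(hK 0).isCompact.of_isClosed_subset (isClosed_iInter fun i => (hK i).isClosed)
        (Set.iInter_subset K 0), convex_iInter fun i => (hK i).convex⟩
    refine hcont _ _ (fun i => (hK i).quasiConcave_indicator ht) (hI.quasiConcave_indicator ht)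
      (Or.inr fun i j hij => ?_)
      fun x => (hanti.tendsto_indicator K (fun _ => t) x).mono_right (pure_le_nhds _)
    exact Set.indicator_le_indicator_of_subset (hanti hij) fun _ => ht

lemma isSimpleValuation_indicator (hval : IsValuation μ) (hcont : IsContinuousVal μ)
    (hsimple : IsSimpleVal μ) (ht : 0 ≤ t) :
    IsSimpleValuation fun K : Set (EuclideanSpace ℝ (Fin N)) => μ (K.indicator fun _ => t) where
  toIsConvexValuation := isConvexValuation_indicator hval hcont ht
  eq_zero_of_subset_hyperplane K hK u hu c hKu := by
    have hnull : volume K = 0 := measure_mono_null hKu (addHaar_inner_eq volume hu c)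
    refine hsimple _ (hK.quasiConcave_indicator ht) ?_
    exact (measure_eq_zero_iff_ae_notMem.1 hnull).mono fun x hx => Set.indicator_of_notMem hx _

lemma isIsometryInvariant_indicator (hinv : IsInvariantVal μ) (ht : 0 ≤ t) :
    IsIsometryInvariant fun K : Set (EuclideanSpace ℝ (Fin N)) => μ (K.indicator fun _ => t) := by
  intro K hK T
  have hcomp : (T '' K).indicator (fun _ => t) = fun x => K.indicator (fun _ => t) (T.symm x) := by
    rw [← T.preimage_symm]
    rfl
  simp only [hcomp, hinv T.symm _ (hK.quasiConcave_indicator ht)]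

lemma continuousOn_apply_indicator (hcont : IsContinuousVal μ) (hK : IsCompactConvex K) :
    ContinuousOn (fun t : ℝ => μ (K.indicator fun _ => t)) (Set.Ici 0) := by
  refine continuousOn_iff_continuous_domRestrict.2 <|
    continuous_of_tendsto_comp_monotone_or_antitone fun t a hmono hta => ?_
  refine hcont (fun i => K.indicator fun _ => (t i : ℝ)) _
    (fun i => hK.quasiConcave_indicator (t i).2) (hK.quasiConcave_indicator a.2) ?_ fun x => ?_
  · exact hmono.imp (fun h i j hij x => Set.indicator_le_indicator (h hij))
      fun h i j hij x => Set.indicator_le_indicator (h hij)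
  · by_cases hx : x ∈ K
    · simp only [Set.indicator_of_mem hx]
      exact (continuous_subtype_val.tendsto a).comp hta
    · simp only [Set.indicator_of_notMem hx, tendsto_const_nhds]

end Indicators

end

/-- For an invariant, continuous and simple valuation `μ` on `C^N` there exists a
continuous `φ : [0,∞) → ℝ` with `φ(0) = 0` such that `μ(t·1_K) = φ(t)·vol_N(K)` for
every `t ≥ 0` and every convex body `K`. -/
theorem simple_valuation_on_multiples_of_indicators {N : ℕ}
    (μ : (EuclideanSpace ℝ (Fin N) → ℝ) → ℝ)
    (hval : IsValuation μ) (hinv : IsInvariantVal μ)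
    (hcont : IsContinuousVal μ) (hsimple : IsSimpleVal μ) :
    ∃ φ : ℝ → ℝ, ContinuousOn φ (Set.Ici 0) ∧ φ 0 = 0 ∧
      ∀ t : ℝ, 0 ≤ t → ∀ K : Set (EuclideanSpace ℝ (Fin N)), IsConvexBody K →
        μ (K.indicator fun _ => t) = φ t * (volume K).toReal := by
  let b := stdOrthonormalBasis ℝ (EuclideanSpace ℝ (Fin N))
  refine ⟨fun t => μ ((parallelepiped b).indicator fun _ => t), ?_, ?_, fun t ht K hK => ?_⟩
  · exact continuousOn_apply_indicator hcont (isCompactConvex_parallelepiped b)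
  · simp only [Set.indicator_zero]
    exact hval.1
  · have hf := isSimpleValuation_indicator hval hcont hsimple ht
    exact hf.eq_mul_volumeReal (isIsometryInvariant_indicator hinv ht) b ⟨hK.2.1, hK.2.2⟩

end
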